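/- arXiv:2001.06484 — 2 statements merged into one kernel-verified Lean document; each statement's English description precedes it below -/
import Mathlib

section
/- For every ε > 0 there exists a constant c_ε such that for every finite group G one has C(G) ≤ (1 + ε)·√|G| + c_ε. -/
/-!
Definitions supporting the formalization of
"An upper bound on the Chebotarev invariant of a finite group" (Lucchini–Tracey).
-/

open scoped BigOperators

namespace ChebotarevPaper

/-- A `k`-tuple of elements of `G` invariably generates `G` if, replacing each entry by an
arbitrary conjugate, the resulting elements always generate `G`. -/
def InvGen (G : Type*) [Group G] {k : ℕ} (f : Fin k → G) : Prop :=
  ∀ c : Fin k → G, Subgroup.closure (Set.range fun i => c i * f i * (c i)⁻¹) = ⊤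

/-- The probability that `k` independent uniformly random elements of `G` invariably
generate `G`. -/
noncomputable def probInvGen (G : Type*) [Group G] (k : ℕ) : ℝ :=
  Nat.card {f : Fin k → G // InvGen G f} / (Nat.card G : ℝ) ^ k

/-- The Chebotarev invariant `C(G)`:  `C(G) = Σ_{k ≥ 0} (1 − P_I(G,k))`, where `P_I(G,k)`
is the probability that `k` independent uniformly random elements of `G` invariably
generate `G`. -/
noncomputable def cheb (G : Type*) [Group G] : ℝ :=
  ∑' k : ℕ, (1 - probInvGen G k)

/-- The probability that `k` independent uniformly random elements of `G` generate `G`. -/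
noncomputable def probGen (G : Type*) [Group G] (k : ℕ) : ℝ :=
  Nat.card {f : Fin k → G // Subgroup.closure (Set.range f) = ⊤} / (Nat.card G : ℝ) ^ k

/-- The expected number of uniformly random elements of `G` needed to generate `G`. -/
noncomputable def expectedGen (G : Type*) [Group G] : ℝ :=
  ∑' k : ℕ, (1 - probGen G k)

/-- `d(G)`: the minimal number of generators of `G`. -/
noncomputable def minGen (G : Type*) [Group G] : ℕ :=
  sInf {n | ∃ f : Fin n → G, Subgroup.closure (Set.range f) = ⊤}

/-- `σ` has the defining property of the constant `σ = 2.118456563…` of Pomerance: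
for every finite group `X`, the expected number of uniformly random elements needed to
generate `X` is at most `d(X) + σ`. -/
def IsPomeranceConst (σ : ℝ) : Prop :=
  ∀ (X : Type) [Group X] [Finite X], expectedGen X ≤ minGen X + σ

variable (G : Type*) [Group G]

/-- `(X, Y)` is a chief factor of `G`:  both are normal in `G`, `Y < X`, and no normal
subgroup of `G` lies strictly between them (i.e. `X/Y` is a minimal normal subgroup of
`G/Y`). -/
def IsChiefFactorPair (X Y : Subgroup G) : Prop :=
  X.Normal ∧ Y.Normal ∧ Y < X ∧
    ∀ N : Subgroup G, N.Normal → Y ≤ N → N ≤ X → N = Y ∨ N = X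

/-- The chief factor `X/Y` is complemented: there is `U ≤ G` with `UX = G` and
`U ⊓ X = Y`. -/
def IsComplementedFactor (X Y : Subgroup G) : Prop :=
  ∃ U : Subgroup G, U ⊔ X = ⊤ ∧ U ⊓ X = Y

/-- The chief factor `X/Y` is a Frattini chief factor, i.e. `X/Y ≤ Frat(G/Y)`;
equivalently (and this is how we state it), `X/Y` is abelian and has no complement
in `G`. -/
def IsFrattiniFactor (X Y : Subgroup G) : Prop :=
  (∀ a b : G, a ∈ X → b ∈ X → a * b * a⁻¹ * b⁻¹ ∈ Y) ∧ ¬ IsComplementedFactor G X Y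

/-- The chief factor `X/Y` is central in `G`, i.e. `X/Y ≤ Z(G/Y)`. -/
def IsCentralFactor (X Y : Subgroup G) : Prop :=
  ∀ g x : G, x ∈ X → g * x * g⁻¹ * x⁻¹ ∈ Y

/-- The `G`-group `V` (a group with an action `a : G →* MulAut V` of `G` by automorphisms)
is `G`-isomorphic to the chief factor `X/Y` (on which `G` acts by conjugation): there is a
surjective homomorphism `X →* V` with kernel `Y` transforming conjugation by `g ∈ G` into
the action of `g` on `V`. -/
def RepresentsFactor {V : Type*} [Group V] (a : G →* MulAut V) (X Y : Subgroup G) : Prop :=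
  ∃ f : X →* V, Function.Surjective f ∧ (∀ x : X, f x = 1 ↔ (x : G) ∈ Y) ∧
    ∀ (g : G) (x y : X), (y : G) = g * (x : G) * g⁻¹ → f y = a g (f x)

/-- Two `G`-groups `(V₁, a₁)`, `(V₂, a₂)` are `G`-equivalent: there are isomorphisms
`φ : V₁ ≃* V₂` and `Φ : V₁ ⋊ G ≃* V₂ ⋊ G` making the natural diagram of the two
extensions `1 → Vᵢ → Vᵢ ⋊ G → G → 1` commute. -/
def GEquiv {V₁ V₂ : Type*} [Group V₁] [Group V₂]
    (a₁ : G →* MulAut V₁) (a₂ : G →* MulAut V₂) : Prop :=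
  ∃ (φ : V₁ ≃* V₂) (Φ : (V₁ ⋊[a₁] G) ≃* (V₂ ⋊[a₂] G)),
    (∀ v : V₁, Φ (SemidirectProduct.inl v) = SemidirectProduct.inl (φ v)) ∧
    ∀ x, (Φ x).right = x.right

/-- `G`-isomorphism of `G`-groups. -/
def GIso {V₁ V₂ : Type*} [Group V₁] [Group V₂]
    (a₁ : G →* MulAut V₁) (a₂ : G →* MulAut V₂) : Prop :=
  ∃ φ : V₁ ≃* V₂, ∀ (g : G) (v : V₁), φ (a₁ g v) = a₂ g (φ v)

/-- `N` is a minimal normal subgroup of `G`. -/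
def IsMinimalNormal (N : Subgroup G) : Prop :=
  N.Normal ∧ N ≠ ⊥ ∧ ∀ M : Subgroup G, M.Normal → M ≠ ⊥ → M ≤ N → M = N

/-- The socle of `G`: the subgroup generated by all minimal normal subgroups of `G`. -/
def socle : Subgroup G := sSup {N : Subgroup G | IsMinimalNormal G N}

instance socle_normal : (socle G).Normal := by
  constructor
  intro n hn g
  have h : socle G ≤ (socle G).comap (MulAut.conj g).toMonoidHom := by
    rw [socle]
    apply sSup_le
    intro N hN x hx
    have h1 : (MulAut.conj g).toMonoidHom x ∈ N := by
      simpa [MulAut.conj_apply] using hN.1.conj_mem x hx g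
    exact Subgroup.mem_comap.2 (le_sSup hN h1)
  have h2 := h hn
  simpa [MulAut.conj_apply] using h2

/-- The action of `G` (by conjugation, through `f : G →* Q`) on the socle of `Q`. -/
def socAct {Q : Type*} [Group Q] (f : G →* Q) : G →* MulAut (socle Q) :=
  MulAut.conjNormal.comp f

/-- The diagonal action of `G` on `V × V` induced by an action on `V`. -/
def prodAct {V : Type*} [Group V] (a : G →* MulAut V) : G →* MulAut (V × V) where
  toFun g := MulEquiv.prodCongr (a g) (a g)
  map_one' := by
    ext x <;> simp [MulEquiv.prodCongr, MulAut.one_apply]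
  map_mul' g h := by
    ext x <;> simp [MulEquiv.prodCongr, MulAut.mul_apply]

/-- The diagonal action of `H` on `V^u` induced by an action on `V`. -/
def diagAct (H : Type*) [Group H] {V : Type*} [Group V] (b : H →* MulAut V) (u : ℕ) :
    H →* MulAut (Fin u → V) where
  toFun g := MulEquiv.piCongrRight fun _ => b g
  map_one' := by
    ext x i; simp
  map_mul' g h := by
    ext x i; simp [MulAut.mul_apply]

variable {G}

/-- The elements `gs 0, …, gs (k-1)` of `G` satisfy the `V`-property in `G`: they all lie
in the union of the `G`-conjugates of some maximal subgroup `M` of `G` such that the socle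
of `G/core_G(M)` is `G`-equivalent to `V` or to `V × V`. -/
def SatisfyVProperty {V : Type*} [Group V] (a : G →* MulAut V) {k : ℕ}
    (gs : Fin k → G) : Prop :=
  ∃ M : Subgroup G, IsCoatom M ∧
    (GEquiv G (socAct G (QuotientGroup.mk' M.normalCore)) a ∨
      GEquiv G (socAct G (QuotientGroup.mk' M.normalCore)) (prodAct G a)) ∧
    ∀ i, ∃ x : G, x * gs i * x⁻¹ ∈ M

/-- `P*_{G,V}(k)`: the probability that `k` independent uniformly random elements of `G`
satisfy the `V`-property in `G`. -/
noncomputable def pStar {V : Type*} [Group V] (a : G →* MulAut V) (k : ℕ) : ℝ :=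
  Nat.card {gs : Fin k → G // SatisfyVProperty a gs} / (Nat.card G : ℝ) ^ k

/-- The collection of normal subgroups `N` of `G` such that `G/N` is isomorphic to the
monolithic primitive group `L_V` associated to `V` (that is, `V ⋊ (G/C_G(V))` if `V` is
abelian and `G/C_G(V)` otherwise; here `C_G(V)` is the kernel of the action of `G` on
`V`) and the socle of `G/N` is `G`-equivalent to `V`. -/
def crownNormals {V : Type*} [Group V] (a : G →* MulAut V) : Set (Subgroup G) :=
  {N | ∃ _ : N.Normal,
    ((∀ x y : V, x * y = y * x) →
      Nonempty ((G ⧸ N) ≃* (V ⋊[QuotientGroup.kerLift a] (G ⧸ a.ker)))) ∧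
    (¬ (∀ x y : V, x * y = y * x) → Nonempty ((G ⧸ N) ≃* (G ⧸ a.ker))) ∧
    GEquiv G (socAct G (QuotientGroup.mk' N)) a}

/-- `R_G(V)`: the intersection of all normal subgroups `N` of `G` with `G/N ≅ L_V` and
`soc(G/N)` `G`-equivalent to `V`. -/
def crownRadical {V : Type*} [Group V] (a : G →* MulAut V) : Subgroup G :=
  sInf (crownNormals a)

instance crownRadical_normal {V : Type*} [Group V] (a : G →* MulAut V) :
    (crownRadical a).Normal := by
  constructor
  intro n hn g
  rw [crownRadical, Subgroup.mem_sInf] at hn ⊢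
  intro p hp
  obtain ⟨hpN, hrest⟩ := hp
  exact hpN.conj_mem n (hn p ⟨hpN, hrest⟩) g

/-- `I_G(V)`: the preimage in `G` of the socle of `G/R_G(V)`; the `V`-crown of `G` is
`I_G(V)/R_G(V)`. -/
def crownSocle {V : Type*} [Group V] (a : G →* MulAut V) : Subgroup G :=
  (socle (G ⧸ crownRadical a)).comap (QuotientGroup.mk' (crownRadical a))

/-- A chief series of `G`: a chain `⊥ = N_0 < N_1 < … < N_len = ⊤` of normal subgroups
of `G` in which each factor `N_{i+1}/N_i` is a chief factor of `G`. -/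
structure ChiefSeries (G : Type*) [Group G] where
  len : ℕ
  ser : Fin (len + 1) → Subgroup G
  bot_eq : ser 0 = ⊥
  top_eq : ser (Fin.last len) = ⊤
  chief : ∀ i : Fin len, IsChiefFactorPair G (ser i.succ) (ser i.castSucc)

/-- `δ_V(G)` (for a `G`-module `V`): the number of complemented factors in the chief
series `S` of `G` which are `G`-isomorphic to `V`. -/
noncomputable def deltaIso {V : Type*} [Group V] (a : G →* MulAut V)
    (S : ChiefSeries G) : ℕ :=
  Nat.card {i : Fin S.len //
    IsComplementedFactor G (S.ser i.succ) (S.ser i.castSucc) ∧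
    RepresentsFactor G a (S.ser i.succ) (S.ser i.castSucc)}

/-- The chief factor `X/Y` of `G` is `G`-equivalent to the `G`-group `(V, a)`. -/
def FactorGEquiv (X Y : Subgroup G) {V : Type*} [Group V] (a : G →* MulAut V) : Prop :=
  ∃ (W : Type) (_ : Group W) (b : G →* MulAut W),
    RepresentsFactor G b X Y ∧ GEquiv G b a

/-- `δ_V(G)` (for a `G`-group `V`): the number of non-Frattini factors in the chief
series `S` of `G` which are `G`-equivalent to `V`. -/
noncomputable def deltaEquiv {V : Type*} [Group V] (a : G →* MulAut V)
    (S : ChiefSeries G) : ℕ :=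
  Nat.card {i : Fin S.len //
    ¬ IsFrattiniFactor G (S.ser i.succ) (S.ser i.castSucc) ∧
    FactorGEquiv (S.ser i.succ) (S.ser i.castSucc) a}

/-- Bundled `G`-group: a group together with an action of `G` by automorphisms. -/
structure GGroup (G : Type) [Group G] : Type 1 where
  carrier : Type
  [grp : Group carrier]
  act : G →* MulAut carrier

attribute [instance] GGroup.grp

/-- The action `b` of `H` on `V` is irreducible: `V` is nontrivial and has no proper
nontrivial (normal) `H`-invariant subgroup. -/
def IsIrreducibleGGroup (H : Type*) [Group H] {V : Type*} [Group V]
    (b : H →* MulAut V) : Prop :=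
  Nontrivial V ∧
    ∀ W : Subgroup V, W.Normal → (∀ (h : H) (v : V), v ∈ W → b h v ∈ W) → W = ⊥ ∨ W = ⊤

/-- The `H`-equivariant endomorphisms of `V` (for `H`-modules `V` this is
`End_H(V)`). -/
def EquivEnd (H : Type*) [Group H] {V : Type*} [Group V] (b : H →* MulAut V) :=
  {f : V →* V // ∀ (h : H) (v : V), f (b h v) = b h (f v)}

/-- `q_V := |End_H(V)|`. -/
noncomputable def endCard (H : Type*) [Group H] {V : Type*} [Group V]
    (b : H →* MulAut V) : ℕ :=
  Nat.card (EquivEnd H b)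

/-- `n_V := dim_{End_H(V)} V`, characterised by `|End_H(V)| ^ n_V = |V|` (for a finite
irreducible `H`-module `V`, `End_H(V)` is a field and `V` a vector space over it). -/
noncomputable def dimEnd (H : Type*) [Group H] {V : Type*} [Group V]
    (b : H →* MulAut V) : ℕ :=
  sInf {n : ℕ | endCard H b ^ n = Nat.card V}

/-- The set of derivations `ζ : H → V` (satisfying `ζ(h₁h₂) = ζ(h₁)^{h₂} · ζ(h₂)`). -/
def DerSet (H : Type*) [Group H] {V : Type*} [Group V] (b : H →* MulAut V) :
    Set (H → V) :=
  {ζ | ∀ h₁ h₂ : H, ζ (h₁ * h₂) = b h₂ (ζ h₁) * ζ h₂}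

/-- The set of inner derivations `h ↦ [h,v] = v^h · v⁻¹`. -/
def IderSet (H : Type*) [Group H] {V : Type*} [Group V] (b : H →* MulAut V) :
    Set (H → V) :=
  {ζ | ∃ v : V, ∀ h : H, ζ h = b h v * v⁻¹}

/-- `m := dim_{End_H(V)} H¹(H,V)` where `H¹(H,V) = Der(H,V)/Ider(H,V)`, characterised by
`|End_H(V)| ^ m · |Ider(H,V)| = |Der(H,V)|`. -/
noncomputable def h1Dim (H : Type*) [Group H] {V : Type*} [Group V]
    (b : H →* MulAut V) : ℕ :=
  sInf {m : ℕ | endCard H b ^ m * Nat.card (IderSet H b) = Nat.card (DerSet H b)}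

/-- The probability that a uniformly random element of `H` fixes a nonzero (i.e.
non-identity) vector of `V`. -/
noncomputable def fixProb (H : Type*) [Group H] {V : Type*} [Group V]
    (b : H →* MulAut V) : ℝ :=
  Nat.card {h : H // ∃ v : V, v ≠ 1 ∧ b h v = v} / (Nat.card H : ℝ)

/-- `A` is a set of representatives for the irreducible `G`-modules which are
`G`-isomorphic to a chief factor of `G` satisfying `P`:  every member of `A` is an
irreducible abelian `G`-group `G`-isomorphic to some chief factor satisfying `P`, and
every chief factor of `G` satisfying `P` is `G`-isomorphic to exactly one member
of `A`. -/
def IsModuleRepSet {G : Type} [Group G] (P : Subgroup G → Subgroup G → Prop)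
    (A : Finset (GGroup G)) : Prop :=
  (∀ V ∈ A, (∀ x y : V.carrier, x * y = y * x) ∧ IsIrreducibleGGroup G V.act ∧
      ∃ X Y : Subgroup G, IsChiefFactorPair G X Y ∧ P X Y ∧ RepresentsFactor G V.act X Y) ∧
  ∀ X Y : Subgroup G, IsChiefFactorPair G X Y → P X Y →
    ∃! V : GGroup G, V ∈ A ∧ RepresentsFactor G V.act X Y

/-- `A` is a set of representatives for the irreducible `G`-groups which are
`G`-equivalent to a chief factor of `G` satisfying `P`. -/
def IsGGroupRepSet {G : Type} [Group G] (P : Subgroup G → Subgroup G → Prop)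
    (A : Finset (GGroup G)) : Prop :=
  (∀ V ∈ A, IsIrreducibleGGroup G V.act ∧
      ∃ X Y : Subgroup G, IsChiefFactorPair G X Y ∧ P X Y ∧ FactorGEquiv X Y V.act) ∧
  ∀ X Y : Subgroup G, IsChiefFactorPair G X Y → P X Y →
    ∃! V : GGroup G, V ∈ A ∧ FactorGEquiv X Y V.act

/-!
A tuple fails to invariably generate `G` iff for some proper subgroup `M` it avoids the set `D_M` of
derangements of `G` on `G ⧸ M`. If `d = |D_M|`, the Cameron–Cohen bound gives `|G| ≤ d (d + 1)`, so
the expected time until a random element lands in a given `D_M` is at most `√|G| + 1`; the problem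
is to hit all the `D_M` simultaneously.

Take a threshold `t = |G| ^ s` with `1/2 < s < 6/11`. There are at most `|G| ^ log₂ |G|`
subgroups, so all `D_M` with `|D_M| ≥ t` have very probably been hit after `ε √|G|` steps. The
remaining `D_M` all coincide. Indeed, let `X` and `Y` be transitive `G`-sets with at most `b < t`
derangements, and let `H` be a point stabilizer on `X`. Averaging fixed-point counts shows that
the set of elements of `H` without exactly one fixed point on `Y` has size `L` with `|X| L ≤ 3 b`.
If `H` had no fixed point on `Y`, then `|H| ≤ L ^ 5`: either this set is not closed under
multiplication, which forces small centralizer indices and hence a large point stabilizer, or it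
is a subgroup and the action on `Y` resembles that of a Frobenius group with small kernel.
Combined with `|H| ≤ b` this gives `|G| ^ 6 ≤ 243 b ^ 10 (b + 1)`, which is false for large `G`.
So `H` fixes a point of `Y` and `D_Y ⊆ D_X`; the situation is symmetric in `X` and `Y`.
-/

section PermutationCharacter

open MulAction Set
open scoped Pointwise

/-- The permutation character of the action of `G` on `X`, i.e. the number of fixed points of `g`
(with the junk value `0` if there are infinitely many). -/
noncomputable def permChar (X : Type*) [MulAction G X] (g : G) : ℕ :=
  (fixedBy X g).ncard

variable (G) in
/-- The elements of `G` without fixed points on `X`. When `X = G ⧸ M` they are the elements that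
lie in no conjugate of `M`. -/
def derangementSet (X : Type*) [MulAction G X] : Set G :=
  {g | ∀ x : X, g • x ≠ x}

variable (G) in
/-- The elements of `G` with exactly one fixed point on `X`. -/
def uniqueFixers (X : Type*) [MulAction G X] : Set G :=
  {g | permChar X g = 1}

variable {X : Type*} [MulAction G X]

lemma permChar_conj (g h : G) : permChar X (g * h * g⁻¹) = permChar X h := by
  rw [permChar, ← smul_fixedBy, ncard_smul_set, permChar]

lemma permChar_inv (g : G) : permChar X g⁻¹ = permChar X g := by
  rw [permChar, fixedBy_inv, permChar]

lemma permChar_one : permChar X (1 : G) = Nat.card X := by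
  rw [permChar, fixedBy_one_eq_univ, ncard_univ]

lemma permChar_eq_one_iff {g : G} : permChar X g = 1 ↔ ∃! x : X, g • x = x := by
  rw [permChar, ncard_eq_one]
  simp only [Set.ext_iff, mem_fixedBy, mem_singleton_iff, ExistsUnique]
  exact exists_congr fun a => ⟨fun h => ⟨(h a).2 rfl, fun y hy => (h y).1 hy⟩,
    fun h y => ⟨h.2 y, fun hy => hy ▸ h.1⟩⟩

lemma permChar_eq_zero_iff [Finite X] {g : G} :
    permChar X g = 0 ↔ g ∈ derangementSet G X := by
  rw [permChar, ncard_eq_zero, eq_empty_iff_forall_notMem]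
  rfl

lemma card_orbit_mul_card_stabilizer (x : X) :
    (orbit G x).ncard * Nat.card (stabilizer G x) = Nat.card G := by
  rw [← index_stabilizer, mul_comm, Subgroup.card_mul_index]

lemma card_mul_card_stabilizer [IsPretransitive G X] (x : X) :
    Nat.card X * Nat.card (stabilizer G x) = Nat.card G := by
  rw [← index_stabilizer_of_transitive G x, mul_comm, Subgroup.card_mul_index]

lemma sum_stabilizer_smul {M : Type*} [AddCommMonoid M] {f : G → M}
    (hf : ∀ g h, f (g * h * g⁻¹) = f h) (g : G) (x : X) [Fintype (stabilizer G x)]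
    [Fintype (stabilizer G (g • x))] :
    ∑ h : stabilizer G (g • x), f h = ∑ h : stabilizer G x, f h :=
  (Fintype.sum_equiv (stabilizerEquivStabilizer (G := G) (a := x) rfl).toEquiv _ _
    fun h => by simp [stabilizerEquivStabilizer_apply, hf]).symm

/-- Frobenius reciprocity for the trivial character of a point stabilizer, proved by counting
pairs `(g, y)` with `g • y = y`. -/
lemma sum_permChar_smul [Fintype G] [Finite X] [IsPretransitive G X] {M : Type*} [AddCommMonoid M]
    {f : G → M} (hf : ∀ g h, f (g * h * g⁻¹) = f h) (x : X) [Fintype (stabilizer G x)] :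
    ∑ g, permChar X g • f g = Nat.card X • ∑ h : stabilizer G x, f h := by
  classical
  have := Fintype.ofFinite X
  calc ∑ g, permChar X g • f g = ∑ g, ∑ y : X, if g • y = y then f g else 0 := by
        refine Finset.sum_congr rfl fun g _ => ?_
        rw [← Finset.sum_filter, Finset.sum_const, permChar, ncard_eq_toFinset_card']
        congr 2
        ext y
        simp
    _ = ∑ y : X, ∑ h : stabilizer G y, f h := by
        rw [Finset.sum_comm]
        refine Finset.sum_congr rfl fun y _ => ?_
        rw [← Finset.sum_filter, Finset.sum_subtype (p := (· ∈ stabilizer G y))]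
        simp
    _ = Nat.card X • ∑ h : stabilizer G x, f h := by
        rw [Nat.card_eq_fintype_card, ← Finset.card_univ, ← Finset.sum_const]
        refine Finset.sum_congr rfl fun y _ => ?_
        obtain ⟨g, rfl⟩ := exists_smul_eq G x y
        exact sum_stabilizer_smul hf g x

end PermutationCharacter

section Derangements

open MulAction Set

lemma sum_ite_mem_eq_ncard {α : Type*} [Fintype α] (s : Set α) [DecidablePred (· ∈ s)] :
    ∑ a, (if a ∈ s then 1 else 0) = s.ncard := by
  rw [Finset.sum_boole, ncard_eq_toFinset_card', filter_mem_univ_eq_toFinset, Nat.cast_id]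

variable {X : Type*} [MulAction G X] [Finite X]

lemma permChar_le_card (g : G) : permChar X g ≤ Nat.card X :=
  ncard_le_card _

lemma sum_permChar_eq_card_orbits_mul_card [Fintype G] :
    ∑ g : G, permChar X g = Nat.card (Quotient (orbitRel G X)) * Nat.card G := by
  classical
  have := Fintype.ofFinite X
  have := Fintype.ofFinite (Quotient (orbitRel G X))
  rw [Nat.card_eq_fintype_card, Nat.card_eq_fintype_card,
    ← sum_card_fixedBy_eq_card_orbits_mul_card_group G X]
  exact Finset.sum_congr rfl fun g _ => ncard_eq_toFinset_card' _ |>.trans (toFinset_card _)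

lemma two_mul_card_le_sum_permChar_stabilizer [Nontrivial X] (x : X)
    [Fintype (stabilizer G x)] :
    2 * Nat.card (stabilizer G x) ≤ ∑ h : stabilizer G x, permChar X h := by
  have h_intransitive : ¬ IsPretransitive (stabilizer G x) X := fun _ => by
    obtain ⟨y, hy⟩ := exists_ne x
    obtain ⟨h, rfl⟩ := exists_smul_eq (stabilizer G x) x y
    exact hy h.2
  rw [pretransitive_iff_subsingleton_quotient, not_subsingleton_iff_nontrivial]
    at h_intransitive
  refine (Nat.mul_le_mul_right _ ?_).trans_eq sum_permChar_eq_card_orbits_mul_card.symm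
  exact Finite.one_lt_card

variable [IsPretransitive G X]

lemma sum_permChar_eq_card [Fintype G] [Nonempty X] : ∑ g : G, permChar X g = Nat.card G := by
  have := (pretransitive_iff_subsingleton_quotient G X).1 ‹_›
  have : Nonempty (Quotient (orbitRel G X)) := Nonempty.map (Quotient.mk _) ‹_›
  rw [sum_permChar_eq_card_orbits_mul_card, Nat.card_unique, one_mul]

lemma sum_permChar_sub_one [Fintype G] [Nonempty X] :
    ∑ g : G, (permChar X g - 1) = (derangementSet G X).ncard := by
  classical
  -- The subtraction is truncated at `0`, so derangements contribute `0` instead of `-1`.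
  have h_trunc (g : G) :
      permChar X g - 1 + 1 = permChar X g + if g ∈ derangementSet G X then 1 else 0 := by
    split_ifs with h <;> rw [← permChar_eq_zero_iff] at h <;> lia
  have h_sum := Finset.sum_congr rfl fun g (_ : g ∈ Finset.univ) => h_trunc g
  rw [Finset.sum_add_distrib, Finset.sum_add_distrib, sum_permChar_eq_card, Finset.sum_const,
    Finset.card_univ, smul_eq_mul, mul_one, Nat.card_eq_fintype_card, add_comm] at h_sum
  rw [Nat.add_left_cancel h_sum, sum_ite_mem_eq_ncard]

variable [Finite G]

lemma card_le_ncard_derangementSet_add_one [Nonempty X] :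
    Nat.card X ≤ (derangementSet G X).ncard + 1 := by
  have := Fintype.ofFinite G
  rw [← Nat.sub_le_iff_le_add, ← sum_permChar_sub_one, ← permChar_one (G := G)]
  exact Finset.single_le_sum (f := fun g : G => permChar X g - 1) (fun _ _ => Nat.zero_le _)
    (Finset.mem_univ 1)

/-- The Cameron–Cohen bound. -/
lemma card_stabilizer_le_ncard_derangementSet [Nontrivial X] (x : X) :
    Nat.card (stabilizer G x) ≤ (derangementSet G X).ncard := by
  have := Fintype.ofFinite G
  have := Fintype.ofFinite (stabilizer G x)
  have h_stab : Nat.card (stabilizer G x) ≤ ∑ h : stabilizer G x, (permChar X (h : G) - 1) := by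
    have h_le : ∑ h : stabilizer G x, permChar X h ≤
        ∑ h : stabilizer G x, ((permChar X (h : G) - 1) + 1) :=
      Finset.sum_le_sum fun h _ => le_tsub_add
    rw [Finset.sum_add_distrib, Finset.sum_const, Finset.card_univ, smul_eq_mul, mul_one,
      ← Nat.card_eq_fintype_card] at h_le
    have := two_mul_card_le_sum_permChar_stabilizer (G := G) x
    lia
  refine Nat.le_of_mul_le_mul_left ?_ (Nat.card_pos (α := X))
  calc Nat.card X * Nat.card (stabilizer G x)
      ≤ Nat.card X * ∑ h : stabilizer G x, (permChar X (h : G) - 1) :=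
        Nat.mul_le_mul_left _ h_stab
    _ = ∑ g : G, permChar X g * (permChar X g - 1) :=
        (sum_permChar_smul (f := fun g => permChar X g - 1) (fun g h => by rw [permChar_conj])
          x).symm
    _ ≤ ∑ g : G, Nat.card X * (permChar X g - 1) := by
        gcongr
        exact permChar_le_card _
    _ = Nat.card X * (derangementSet G X).ncard := by
        rw [← Finset.mul_sum, sum_permChar_sub_one]

lemma card_le_ncard_derangementSet_mul [Nontrivial X] :
    Nat.card G ≤ (derangementSet G X).ncard * ((derangementSet G X).ncard + 1) := by
  obtain ⟨x⟩ : Nonempty X := inferInstance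
  calc Nat.card G = Nat.card (stabilizer G x) * Nat.card X := by
        rw [mul_comm, card_mul_card_stabilizer]
    _ ≤ _ := Nat.mul_le_mul (card_stabilizer_le_ncard_derangementSet x)
        card_le_ncard_derangementSet_add_one

end Derangements

section UniqueFixers

open MulAction Set

lemma two_mul_card_le_card_of_lt [Finite G] {H K : Subgroup G} (h : H < K) :
    2 * Nat.card H ≤ Nat.card K := by
  by_contra! h_lt
  have h_card := Nat.eq_of_dvd_of_lt_two_mul Nat.card_pos.ne' (Subgroup.card_dvd_of_le h.le) h_lt
  exact h.ne (Subgroup.eq_of_le_of_card_ge h.le h_card.le)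

lemma card_le_two_mul_ncard_sdiff [Finite G] {H K : Subgroup G} (h : ¬ H ≤ K) :
    Nat.card H ≤ 2 * ((H : Set G) \ K).ncard := by
  have h_inter : 2 * ((H : Set G) ∩ K).ncard ≤ Nat.card H :=
    two_mul_card_le_card_of_lt (inf_lt_left.2 h)
  have h_add : ((H : Set G) ∩ K).ncard + ((H : Set G) \ K).ncard = Nat.card H :=
    ncard_inter_add_ncard_sdiff_eq_ncard _ _
  lia

lemma index_centralizer_le_ncard [Finite G] {s : Set G} (hs : ∀ g, ∀ h ∈ s, g * h * g⁻¹ ∈ s)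
    {a : G} (ha : a ∈ s) : (Subgroup.centralizer {a}).index ≤ s.ncard := by
  have h_orbit : orbit (ConjAct G) a ⊆ s := by
    rintro _ ⟨g, rfl⟩
    exact hs _ a ha
  calc (Subgroup.centralizer {a}).index = (stabilizer (ConjAct G) a).index := by
        rw [Subgroup.centralizer_eq_comap_stabilizer]
        exact Subgroup.index_comap_of_surjective _ ConjAct.toConjAct.surjective
    _ = (orbit (ConjAct G) a).ncard := index_stabilizer _ _
    _ ≤ s.ncard := ncard_le_ncard h_orbit

variable {X : Type*} [MulAction G X]

lemma conj_mem_uniqueFixers_iff {g h : G} :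
    g * h * g⁻¹ ∈ uniqueFixers G X ↔ h ∈ uniqueFixers G X := by
  rw [uniqueFixers, mem_ofPred_eq, permChar_conj, mem_ofPred_eq]

lemma inv_mem_uniqueFixers_iff {g : G} : g⁻¹ ∈ uniqueFixers G X ↔ g ∈ uniqueFixers G X := by
  rw [uniqueFixers, mem_ofPred_eq, permChar_inv, mem_ofPred_eq]

lemma mem_uniqueFixers_iff {g : G} : g ∈ uniqueFixers G X ↔ ∃! x : X, g • x = x :=
  permChar_eq_one_iff

lemma one_notMem_uniqueFixers (hX : fixedPoints G X = ∅) : (1 : G) ∉ uniqueFixers G X := by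
  rw [mem_uniqueFixers_iff]
  rintro ⟨x, -, hx⟩
  exact eq_empty_iff_forall_notMem.1 hX x fun g => hx _ (one_smul _ _)

lemma notMem_derangementSet_orbit_iff {g : G} {x : X} :
    g ∉ derangementSet G (orbit G x) ↔ ∃ y ∈ orbit G x, g • y = y := by
  simp [derangementSet, Subtype.ext_iff]

lemma disjoint_uniqueFixers_sdiff_derangementSet_orbit {x y : X} (h : orbit G x ≠ orbit G y) :
    Disjoint (uniqueFixers G X \ derangementSet G (orbit G x))
      (uniqueFixers G X \ derangementSet G (orbit G y)) := by
  refine disjoint_left.2 fun g ⟨hg, hgx⟩ ⟨_, hgy⟩ => h ?_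
  obtain ⟨z, hzx, hz⟩ := notMem_derangementSet_orbit_iff.1 hgx
  obtain ⟨w, hwy, hw⟩ := notMem_derangementSet_orbit_iff.1 hgy
  rw [← orbit_eq_iff.2 hzx, ← orbit_eq_iff.2 hwy, (mem_uniqueFixers_iff.1 hg).unique hz hw]

lemma mem_uniqueFixers_orbit {g : G} {x : X} (hg : g ∈ uniqueFixers G X)
    (hgx : g ∉ derangementSet G (orbit G x)) : g ∈ uniqueFixers G (orbit G x) := by
  obtain ⟨y, hyx, hy⟩ := notMem_derangementSet_orbit_iff.1 hgx
  exact mem_uniqueFixers_iff.2 ⟨⟨y, hyx⟩, Subtype.ext hy, fun z hz => Subtype.ext <|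
    (mem_uniqueFixers_iff.1 hg).unique (congrArg Subtype.val hz) hy⟩

variable [Finite G]

/-- A point stabilizer in `G_x` of some other point of the orbit of `x` avoids `uniqueFixers`;
applying the orbit-stabilizer theorem both to `G` and to `G_x` gives the bound. -/
lemma card_stabilizer_sq_le {x : X} (hx : x ∉ fixedPoints G X) :
    Nat.card (stabilizer G x) ^ 2 ≤ (uniqueFixers G X)ᶜ.ncard * Nat.card G := by
  obtain ⟨g, hg⟩ := not_forall.1 hx
  have h_orbit : (orbit (stabilizer G x) (g • x)).ncard ≤ (orbit G x).ncard := by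
    rw [← orbit_smul g x]
    exact ncard_le_ncard (orbit_subgroup_subset _ _) (finite_range _)
  have h_two_points : Nat.card (stabilizer (stabilizer G x) (g • x)) ≤
      (uniqueFixers G X)ᶜ.ncard := by
    refine Nat.card_le_card_of_injective (β := ((uniqueFixers G X)ᶜ : Set G))
      (fun h => ⟨h.1.1, fun h_unique => hg ?_⟩) fun _ _ h => ?_
    · exact (mem_uniqueFixers_iff.1 h_unique).unique h.2 h.1.2
    · exact Subtype.ext (Subtype.ext (Subtype.mk.inj h))
  calc Nat.card (stabilizer G x) ^ 2
      = (orbit (stabilizer G x) (g • x)).ncard *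
          Nat.card (stabilizer (stabilizer G x) (g • x)) * Nat.card (stabilizer G x) := by
        rw [card_orbit_mul_card_stabilizer, sq]
    _ ≤ (orbit G x).ncard * (uniqueFixers G X)ᶜ.ncard * Nat.card (stabilizer G x) := by gcongr
    _ = (uniqueFixers G X)ᶜ.ncard * Nat.card G := by
        rw [mul_right_comm, card_orbit_mul_card_stabilizer, mul_comm]

lemma card_le_of_card_le_mul_card_stabilizer {x : X} (hx : x ∉ fixedPoints G X) {c : ℕ}
    (hc : Nat.card G ≤ c * Nat.card (stabilizer G x)) :
    Nat.card G ≤ c ^ 2 * (uniqueFixers G X)ᶜ.ncard := by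
  refine Nat.le_of_mul_le_mul_right ?_ (Nat.card_pos (α := G))
  calc Nat.card G * Nat.card G
      ≤ (c * Nat.card (stabilizer G x)) * (c * Nat.card (stabilizer G x)) := by gcongr
    _ = c ^ 2 * Nat.card (stabilizer G x) ^ 2 := by ring
    _ ≤ c ^ 2 * ((uniqueFixers G X)ᶜ.ncard * Nat.card G) := by
        gcongr
        exact card_stabilizer_sq_le hx
    _ = c ^ 2 * (uniqueFixers G X)ᶜ.ncard * Nat.card G := by ring

/-- The intersection of the centralizers of `a` and `b` fixes the fixed point of `a * b`, so that
point has a large stabilizer. -/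
lemma card_le_pow_five_of_mul_mem_uniqueFixers (hX : fixedPoints G X = ∅) {a b : G}
    (ha : a ∉ uniqueFixers G X) (hb : b ∉ uniqueFixers G X) (hab : a * b ∈ uniqueFixers G X) :
    Nat.card G ≤ (uniqueFixers G X)ᶜ.ncard ^ 5 := by
  obtain ⟨x, hx, hx_unique⟩ := mem_uniqueFixers_iff.1 hab
  have h_le_stabilizer :
      Subgroup.centralizer {a} ⊓ Subgroup.centralizer {b} ≤ stabilizer G x := by
    intro c hc
    rw [Subgroup.mem_inf, Subgroup.mem_centralizer_singleton_iff,
      Subgroup.mem_centralizer_singleton_iff] at hc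
    have h_comm : Commute c (a * b) := Commute.mul_right hc.1 hc.2
    refine hx_unique (c • x) ?_
    beta_reduce
    rw [← mul_smul, ← h_comm.eq, mul_smul, hx]
  have h_index {w : G} (hw : w ∉ uniqueFixers G X) :
      (Subgroup.centralizer {w}).index ≤ (uniqueFixers G X)ᶜ.ncard :=
    index_centralizer_le_ncard (s := (uniqueFixers G X)ᶜ)
      (fun _ _ => mt conj_mem_uniqueFixers_iff.1) hw
  have h_card : Nat.card G ≤ (uniqueFixers G X)ᶜ.ncard ^ 2 * Nat.card (stabilizer G x) := by
    calc Nat.card G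
        = (Subgroup.centralizer {a} ⊓ Subgroup.centralizer {b}).index *
            Nat.card ↥(Subgroup.centralizer {a} ⊓ Subgroup.centralizer {b}) := by
          rw [mul_comm, Subgroup.card_mul_index]
      _ ≤ (uniqueFixers G X)ᶜ.ncard ^ 2 * Nat.card (stabilizer G x) := by
          rw [sq]
          exact Nat.mul_le_mul
            (Subgroup.index_inf_le.trans (Nat.mul_le_mul (h_index ha) (h_index hb)))
            (Subgroup.card_le_of_le h_le_stabilizer)
  refine (card_le_of_card_le_mul_card_stabilizer (eq_empty_iff_forall_notMem.1 hX x)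
    h_card).trans_eq ?_
  ring

lemma exists_subgroup_eq_compl_uniqueFixers (hX : fixedPoints G X = ∅)
    (h_lt : (uniqueFixers G X)ᶜ.ncard ^ 5 < Nat.card G) :
    ∃ K : Subgroup G, (K : Set G) = (uniqueFixers G X)ᶜ :=
  ⟨{ carrier := (uniqueFixers G X)ᶜ
     one_mem' := one_notMem_uniqueFixers hX
     mul_mem' := fun ha hb hab =>
      h_lt.not_ge (card_le_pow_five_of_mul_mem_uniqueFixers hX ha hb hab)
     inv_mem' := mt inv_mem_uniqueFixers_iff.1 }, rfl⟩

lemma ncard_uniqueFixers_sdiff_derangementSet_orbit (x : X) :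
    (uniqueFixers G X \ derangementSet G (orbit G x)).ncard =
      (orbit G x).ncard * ((stabilizer G x : Set G) ∩ uniqueFixers G X).ncard := by
  classical
  have := Fintype.ofFinite G
  have : Finite (orbit G x) := finite_range _
  let x₀ : orbit G x := ⟨x, mem_orbit_self x⟩
  have h_stabilizer : stabilizer G x₀ = stabilizer G x := by
    ext g
    simp [x₀, Subtype.ext_iff]
  calc (uniqueFixers G X \ derangementSet G (orbit G x)).ncard
      = ∑ g, permChar (orbit G x) g • (if g ∈ uniqueFixers G X then 1 else 0) := by
        rw [← sum_ite_mem_eq_ncard]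
        refine Finset.sum_congr rfl fun g _ => ?_
        by_cases hg : g ∈ uniqueFixers G X <;> by_cases hgx : g ∈ derangementSet G (orbit G x)
        · simp [hg, hgx, permChar_eq_zero_iff.2 hgx]
        · simp [hg, hgx, show permChar (orbit G x) g = 1 from mem_uniqueFixers_orbit hg hgx]
        all_goals simp [hg]
    _ = (orbit G x).ncard *
          ∑ h : stabilizer G x₀, (if (h : G) ∈ uniqueFixers G X then 1 else 0) :=
        sum_permChar_smul (fun g h => by simp only [conj_mem_uniqueFixers_iff]) x₀
    _ = (orbit G x).ncard * ((stabilizer G x : Set G) ∩ uniqueFixers G X).ncard := by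
        congr 1
        calc ∑ h : stabilizer G x₀, (if (h : G) ∈ uniqueFixers G X then 1 else 0)
            = ((↑) ⁻¹' uniqueFixers G X : Set (stabilizer G x₀)).ncard :=
              sum_ite_mem_eq_ncard _
          _ = ((stabilizer G x : Set G) ∩ uniqueFixers G X).ncard := by
              rw [← ncard_image_of_injective _ Subtype.val_injective, ← h_stabilizer]
              exact congrArg ncard (Subtype.image_preimage_coe _ _)

lemma card_le_two_mul_ncard_uniqueFixers_sdiff {K : Subgroup G}
    (hK : (K : Set G) = (uniqueFixers G X)ᶜ) {x : X} {u : G} (hu : u ∈ uniqueFixers G X)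
    (hux : u • x = x) :
    Nat.card G ≤ 2 * (uniqueFixers G X \ derangementSet G (orbit G x)).ncard := by
  have h_not_le : ¬ stabilizer G x ≤ K := fun h_le => by
    have h_mem : u ∈ (K : Set G) := h_le hux
    rw [hK] at h_mem
    exact h_mem hu
  have h_half := card_le_two_mul_ncard_sdiff h_not_le
  rw [hK, sdiff_compl] at h_half
  calc Nat.card G = (orbit G x).ncard * Nat.card (stabilizer G x) :=
        (card_orbit_mul_card_stabilizer x).symm
    _ ≤ (orbit G x).ncard * (2 * ((stabilizer G x : Set G) ∩ uniqueFixers G X).ncard) := by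
        gcongr
    _ = 2 * (uniqueFixers G X \ derangementSet G (orbit G x)).ncard := by
        rw [ncard_uniqueFixers_sdiff_derangementSet_orbit, mul_left_comm]

/-- The fixed points of elements of `uniqueFixers` lying in a given orbit account for at least half
of `G`; two orbits would leave no room for the identity. -/
lemma uniqueFixers_sdiff_derangementSet_orbit_eq {K : Subgroup G}
    (hK : (K : Set G) = (uniqueFixers G X)ᶜ) {x : X} {u : G} (hu : u ∈ uniqueFixers G X)
    (hux : u • x = x) :
    uniqueFixers G X \ derangementSet G (orbit G x) = uniqueFixers G X := by
  refine sdiff_eq_left.2 (disjoint_left.2 fun v hv hv_orbit => ?_)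
  obtain ⟨y, hvy, -⟩ := mem_uniqueFixers_iff.1 hv
  have h_orbit_ne : orbit G x ≠ orbit G y := fun h_eq =>
    notMem_derangementSet_orbit_iff.2 ⟨y, h_eq ▸ mem_orbit_self y, hvy⟩ hv_orbit
  have h_union := ncard_union_eq (disjoint_uniqueFixers_sdiff_derangementSet_orbit h_orbit_ne)
  have h_subset : (uniqueFixers G X \ derangementSet G (orbit G x)) ∪
      (uniqueFixers G X \ derangementSet G (orbit G y)) ⊆ uniqueFixers G X :=
    union_subset sdiff_subset sdiff_subset
  have h_le := ncard_le_ncard h_subset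
  have h_lt : (uniqueFixers G X).ncard < Nat.card G := by
    rw [← ncard_add_ncard_compl (uniqueFixers G X), ← hK]
    exact Nat.lt_add_of_pos_right (Nat.card_pos (α := K))
  have hx_half := card_le_two_mul_ncard_uniqueFixers_sdiff hK hu hux
  have hy_half := card_le_two_mul_ncard_uniqueFixers_sdiff hK hv hvy
  lia

lemma ncard_orbit_le_ncard_compl_uniqueFixers {K : Subgroup G}
    (hK : (K : Set G) = (uniqueFixers G X)ᶜ) {x : X} {u : G} (hu : u ∈ uniqueFixers G X)
    (hux : u • x = x) : (orbit G x).ncard ≤ (uniqueFixers G X)ᶜ.ncard := by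
  have h_count := ncard_uniqueFixers_sdiff_derangementSet_orbit (G := G) x
  rw [uniqueFixers_sdiff_derangementSet_orbit_eq hK hu hux] at h_count
  have h_lt : ((stabilizer G x : Set G) ∩ uniqueFixers G X).ncard + 1 ≤
      Nat.card (stabilizer G x) := by
    refine ncard_lt_ncard (t := (stabilizer G x : Set G)) ⟨inter_subset_left, fun h => ?_⟩
    have h_one : (1 : G) ∈ (K : Set G) := K.one_mem
    rw [hK] at h_one
    exact h_one (h (stabilizer G x).one_mem).2
  have h_mul := Nat.mul_le_mul_left (orbit G x).ncard h_lt
  rw [mul_add_one, ← h_count, card_orbit_mul_card_stabilizer,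
    ← ncard_add_ncard_compl (uniqueFixers G X)] at h_mul
  exact Nat.le_of_add_le_add_left h_mul

theorem card_le_ncard_compl_uniqueFixers_pow_five (hX : fixedPoints G X = ∅) :
    Nat.card G ≤ (uniqueFixers G X)ᶜ.ncard ^ 5 := by
  by_contra! h_lt
  obtain ⟨K, hK⟩ := exists_subgroup_eq_compl_uniqueFixers hX h_lt
  have h_le_pow : (uniqueFixers G X)ᶜ.ncard ≤ (uniqueFixers G X)ᶜ.ncard ^ 5 :=
    Nat.le_self_pow (by norm_num) _
  obtain ⟨u, hu⟩ : (uniqueFixers G X).Nonempty := by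
    by_contra! h_empty
    rw [h_empty, compl_empty, ncard_univ] at h_lt h_le_pow
    exact h_lt.not_ge h_le_pow
  obtain ⟨x, hux, -⟩ := mem_uniqueFixers_iff.1 hu
  have h_card : Nat.card G ≤ (uniqueFixers G X)ᶜ.ncard * Nat.card (stabilizer G x) := by
    rw [← card_orbit_mul_card_stabilizer x]
    exact Nat.mul_le_mul_right _ (ncard_orbit_le_ncard_compl_uniqueFixers hK hu hux)
  have h_cube := card_le_of_card_le_mul_card_stabilizer
    (eq_empty_iff_forall_notMem.1 hX x) h_card
  rw [← pow_succ] at h_cube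
  have h_pos : 0 < (uniqueFixers G X)ᶜ.ncard :=
    (ncard_pos (toFinite _)).2 ⟨1, one_notMem_uniqueFixers hX⟩
  exact h_lt.not_ge (h_cube.trans (Nat.pow_le_pow_right h_pos (by norm_num)))

end UniqueFixers

section Comparison

open MulAction Set

variable {X Y : Type*} [MulAction G X] [MulAction G Y]

lemma derangementSet_subset_of_stabilizer_le [IsPretransitive G X] {x : X} {y : Y}
    (h : stabilizer G x ≤ stabilizer G y) : derangementSet G Y ⊆ derangementSet G X := by
  intro g hg x' hx'
  obtain ⟨a, rfl⟩ := exists_smul_eq G x x'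
  have h_mem : a⁻¹ * g * a ∈ stabilizer G x := by
    rw [mem_stabilizer_iff, mul_smul, mul_smul, hx', inv_smul_smul]
  have h_fix : (a⁻¹ * g * a) • y = y := h h_mem
  refine hg (a • y) ?_
  rwa [mul_smul, mul_smul, inv_smul_eq_iff] at h_fix

variable [Finite G] [Finite X] [Finite Y] [IsPretransitive G X] [IsPretransitive G Y]

/-- Both sides are compared with the inner product of the permutation character of `X` and the
indicator of the complement of `uniqueFixers G Y`. -/
lemma card_mul_ncard_compl_uniqueFixers_stabilizer_le [Nonempty Y] (x : X) :
    Nat.card X * (uniqueFixers (stabilizer G x) Y)ᶜ.ncard ≤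
      2 * (derangementSet G Y).ncard + (derangementSet G X).ncard := by
  classical
  have := Fintype.ofFinite G
  have : Nonempty X := ⟨x⟩
  have h_pointwise (g : G) :
      permChar X g * (if g ∈ (uniqueFixers G Y)ᶜ then 1 else 0) ≤
        (if g ∈ derangementSet G Y then 1 else 0) + (permChar Y g - 1) +
          (permChar X g - 1) := by
    simp only [mem_compl_iff, uniqueFixers, mem_ofPred_eq, ← permChar_eq_zero_iff]
    split_ifs <;> lia
  calc Nat.card X * (uniqueFixers (stabilizer G x) Y)ᶜ.ncard
      = Nat.card X * ∑ h : stabilizer G x, if (h : G) ∈ (uniqueFixers G Y)ᶜ then 1 else 0 :=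
        congrArg _ (sum_ite_mem_eq_ncard (uniqueFixers (stabilizer G x) Y)ᶜ).symm
    _ = ∑ g : G, permChar X g * (if g ∈ (uniqueFixers G Y)ᶜ then 1 else 0) :=
        (sum_permChar_smul (f := fun g => if g ∈ (uniqueFixers G Y)ᶜ then 1 else 0)
          (fun g h => by simp only [mem_compl_iff, conj_mem_uniqueFixers_iff]) x).symm
    _ ≤ ∑ g : G, ((if g ∈ derangementSet G Y then 1 else 0) + (permChar Y g - 1) +
          (permChar X g - 1)) := Finset.sum_le_sum fun g _ => h_pointwise g
    _ = 2 * (derangementSet G Y).ncard + (derangementSet G X).ncard := by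
        rw [Finset.sum_add_distrib, Finset.sum_add_distrib, sum_permChar_sub_one,
          sum_permChar_sub_one, sum_ite_mem_eq_ncard, two_mul]

variable [Nontrivial X] [Nonempty Y] {b : ℕ}

lemma card_pow_six_le_of_fixedPoints_eq_empty (hX : (derangementSet G X).ncard ≤ b)
    (hY : (derangementSet G Y).ncard ≤ b) {x : X} (hx : fixedPoints (stabilizer G x) Y = ∅) :
    Nat.card G ^ 6 ≤ 243 * b ^ 10 * (b + 1) := by
  set L := (uniqueFixers (stabilizer G x) Y)ᶜ.ncard
  have h_stabilizer : Nat.card (stabilizer G x) ≤ b :=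
    (card_stabilizer_le_ncard_derangementSet x).trans hX
  have h_card_X : Nat.card X ≤ b + 1 := card_le_ncard_derangementSet_add_one.trans (by gcongr)
  have h_mul_L : Nat.card X * L ≤ 3 * b :=
    (card_mul_ncard_compl_uniqueFixers_stabilizer_le x).trans (by lia)
  have h_pow : Nat.card (stabilizer G x) ≤ L ^ 5 := card_le_ncard_compl_uniqueFixers_pow_five hx
  rw [← card_mul_card_stabilizer x]
  calc (Nat.card X * Nat.card (stabilizer G x)) ^ 6
      = (Nat.card X * Nat.card (stabilizer G x)) ^ 5 *
          (Nat.card X * Nat.card (stabilizer G x)) := by ring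
    _ ≤ (Nat.card X * Nat.card (stabilizer G x)) ^ 5 * ((b + 1) * L ^ 5) := by gcongr
    _ = (Nat.card X * L) ^ 5 * Nat.card (stabilizer G x) ^ 5 * (b + 1) := by ring
    _ ≤ (3 * b) ^ 5 * b ^ 5 * (b + 1) := by gcongr
    _ = 243 * b ^ 10 * (b + 1) := by ring

theorem derangementSet_subset_of_ncard_le (hX : (derangementSet G X).ncard ≤ b)
    (hY : (derangementSet G Y).ncard ≤ b) (hb : 243 * b ^ 10 * (b + 1) < Nat.card G ^ 6) :
    derangementSet G Y ⊆ derangementSet G X := by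
  obtain ⟨x⟩ : Nonempty X := inferInstance
  obtain h_empty | ⟨y, hy⟩ := (fixedPoints (stabilizer G x) Y).eq_empty_or_nonempty
  · exact absurd (card_pow_six_le_of_fixedPoints_eq_empty hX hY h_empty) hb.not_ge
  · exact derangementSet_subset_of_stabilizer_le (x := x) (y := y) fun g hg => hy ⟨g, hg⟩

end Comparison

section SubgroupCount

open Set

variable [Finite G]

lemma exists_closure_range_eq_of_card_lt_two_pow {n : ℕ} {H : Subgroup G}
    (hH : Nat.card H < 2 ^ (n + 1)) : ∃ f : Fin n → G, Subgroup.closure (range f) = H := by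
  induction n generalizing H with
  | zero =>
    have h_bot : H = ⊥ := Subgroup.eq_bot_of_card_le H (by lia)
    exact ⟨Fin.elim0, by rw [range_eq_empty, Subgroup.closure_empty, h_bot]⟩
  | succ n ih =>
    obtain rfl | h_ne := eq_or_ne H ⊥
    · exact ⟨1, (Subgroup.closure_eq_bot_iff).2 (by rintro _ ⟨i, rfl⟩; rfl)⟩
    obtain ⟨K, -, hK⟩ := exists_le_covBy_of_lt h_ne.bot_lt
    obtain ⟨f, hf⟩ := ih (H := K) (by have := two_mul_card_le_card_of_lt hK.lt; lia)
    obtain ⟨a, haH, haK⟩ := SetLike.exists_of_lt hK.lt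
    refine ⟨Fin.cons a f, ?_⟩
    have h_closure : Subgroup.closure (range (Fin.cons a f : Fin (n + 1) → G)) =
        Subgroup.closure {a} ⊔ K := by
      rw [Fin.range_cons, insert_eq, Subgroup.closure_union, hf]
    have h_mem : a ∈ Subgroup.closure {a} ⊔ K :=
      Subgroup.mem_sup_left (Subgroup.mem_closure_singleton_self a)
    have h_le : Subgroup.closure {a} ⊔ K ≤ H := sup_le (by simpa using haH) hK.le
    rw [h_closure]
    exact (hK.eq_or_eq le_sup_right h_le).resolve_left fun h => haK (h ▸ h_mem)

lemma card_subgroup_le_card_pow_log :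
    Nat.card (Subgroup G) ≤ Nat.card G ^ Nat.log 2 (Nat.card G) := by
  have h_surj : Function.Surjective
      fun f : Fin (Nat.log 2 (Nat.card G)) → G => Subgroup.closure (range f) := fun H =>
    exists_closure_range_eq_of_card_lt_two_pow <|
      (Subgroup.card_le_card_group H).trans_lt (Nat.lt_pow_succ_log_self one_lt_two _)
  simpa [Nat.card_fun] using Nat.card_le_card_of_surjective _ h_surj

end SubgroupCount

section Probability

open MulAction Set

lemma notMem_derangementSet_quotient_iff {M : Subgroup G} {g : G} :
    g ∉ derangementSet G (G ⧸ M) ↔ ∃ c : G, c * g * c⁻¹ ∈ M := by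
  have h_coset (c : G) : g • ((c⁻¹ : G) : G ⧸ M) = (c⁻¹ : G) ↔ c * g * c⁻¹ ∈ M := by
    rw [MulAction.Quotient.smul_coe, smul_eq_mul, eq_comm, QuotientGroup.eq, inv_inv, mul_assoc]
  simp only [derangementSet, mem_ofPred_eq, not_forall, not_not]
  refine ⟨?_, fun ⟨c, hc⟩ => ⟨_, (h_coset c).2 hc⟩⟩
  rintro ⟨x, hx⟩
  induction x using QuotientGroup.induction_on with
  | H a => exact ⟨a⁻¹, (h_coset a⁻¹).1 (by simpa only [inv_inv] using hx)⟩

lemma invGen_iff_forall_exists_mem_derangementSet {k : ℕ} {f : Fin k → G} :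
    InvGen G f ↔ ∀ M : Subgroup G, M ≠ ⊤ → ∃ i, f i ∈ derangementSet G (G ⧸ M) := by
  constructor
  · intro hf M hM
    by_contra! h_avoid
    choose c hc using fun i => notMem_derangementSet_quotient_iff.1 (h_avoid i)
    refine hM (top_unique ?_)
    rw [← hf c, Subgroup.closure_le]
    rintro _ ⟨i, rfl⟩
    exact hc i
  · intro h c
    by_contra h_ne
    obtain ⟨i, hi⟩ := h _ h_ne
    exact notMem_derangementSet_quotient_iff.2
      ⟨c i, Subgroup.subset_closure (mem_range_self i)⟩ hi

lemma ncard_univ_pi_compl_div_card_pow {α : Type*} [Finite α] [Nonempty α] (s : Set α) (k : ℕ) :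
    ((univ.pi fun _ : Fin k => sᶜ).ncard : ℝ) / (Nat.card α : ℝ) ^ k =
      (1 - s.ncard / Nat.card α) ^ k := by
  have h_ncard : (univ.pi fun _ : Fin k => sᶜ).ncard = sᶜ.ncard ^ k := by
    rw [← Nat.card_coe_set_eq, Nat.card_congr (Equiv.Set.univPi _), Nat.card_pi]
    simp
  have h_pos : (0 : ℝ) < Nat.card α := by exact_mod_cast Nat.card_pos
  have h_compl : (s.ncard : ℝ) + sᶜ.ncard = Nat.card α := by
    exact_mod_cast ncard_add_ncard_compl s
  rw [h_ncard, Nat.cast_pow, ← div_pow, one_sub_div h_pos.ne', ← h_compl, add_sub_cancel_left]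

lemma ncard_biUnion_univ_pi_compl_div_card_pow_le {α ι : Type*} [Finite α] [Nonempty α]
    (I : Finset ι) (D : ι → Set α) {t : ℝ} (hD : ∀ i ∈ I, t ≤ (D i).ncard) (k : ℕ) :
    ((⋃ i ∈ I, univ.pi fun _ : Fin k => (D i)ᶜ).ncard : ℝ) / (Nat.card α : ℝ) ^ k ≤
      I.card * (1 - t / Nat.card α) ^ k := by
  have h_pos : (0 : ℝ) < Nat.card α := by exact_mod_cast Nat.card_pos
  have h_avoid (i : ι) (hi : i ∈ I) :
      ((univ.pi fun _ : Fin k => (D i)ᶜ).ncard : ℝ) / (Nat.card α : ℝ) ^ k ≤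
        (1 - t / Nat.card α) ^ k := by
    have h_le : ((D i).ncard : ℝ) ≤ Nat.card α := by exact_mod_cast ncard_le_card _
    rw [ncard_univ_pi_compl_div_card_pow]
    refine pow_le_pow_left₀ (sub_nonneg.2 ((div_le_one h_pos).2 h_le)) ?_ k
    gcongr
    exact hD i hi
  calc ((⋃ i ∈ I, univ.pi fun _ : Fin k => (D i)ᶜ).ncard : ℝ) / (Nat.card α : ℝ) ^ k
      ≤ (∑ i ∈ I, ((univ.pi fun _ : Fin k => (D i)ᶜ).ncard : ℝ)) / (Nat.card α : ℝ) ^ k := by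
        gcongr
        exact_mod_cast Finset.set_ncard_biUnion_le I _
    _ ≤ I.card * (1 - t / Nat.card α) ^ k := by
        rw [Finset.sum_div, ← nsmul_eq_mul]
        exact Finset.sum_le_card_nsmul _ _ _ h_avoid

lemma tsum_le_of_le_geometric_add_geometric {a : ℕ → ℝ} (ha_nonneg : ∀ k, 0 ≤ a k)
    (ha_le_one : ∀ k, a k ≤ 1) {N p q : ℝ} (hp : 0 < p) (hp_le : p ≤ 1) (hq : 0 < q)
    (hq_le : q ≤ 1) (ha_le : ∀ k, a k ≤ N * (1 - p) ^ k + (1 - q) ^ k) (K : ℕ) :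
    ∑' k, a k ≤ K + N * (1 - p) ^ K / p + 1 / q := by
  have h_geometric {r : ℝ} (hr : 0 < r) (hr_le : r ≤ 1) :
      HasSum (fun k => (1 - r) ^ k) (1 / r) := by
    simpa using hasSum_geometric_of_lt_one (sub_nonneg.2 hr_le) (sub_lt_self 1 hr)
  have h_majorant := ((h_geometric hp hp_le).mul_left (N * (1 - p) ^ K)).add (h_geometric hq hq_le)
  have h_tail_le (k : ℕ) : a (k + K) ≤ N * (1 - p) ^ K * (1 - p) ^ k + (1 - q) ^ k := by
    calc a (k + K) ≤ N * (1 - p) ^ (k + K) + (1 - q) ^ (k + K) := ha_le _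
      _ ≤ N * (1 - p) ^ K * (1 - p) ^ k + (1 - q) ^ k := by
        rw [pow_add _ k K, mul_assoc, mul_comm ((1 - p) ^ k)]
        exact add_le_add le_rfl
          (pow_le_pow_of_le_one (sub_nonneg.2 hq_le) (sub_le_self 1 hq.le) (Nat.le_add_right k K))
  have h_tail : Summable fun k => a (k + K) :=
    .of_nonneg_of_le (fun k => ha_nonneg _) h_tail_le h_majorant.summable
  rw [← ((summable_nat_add_iff K).1 h_tail).sum_add_tsum_nat_add K, add_assoc]
  gcongr ?_ + ?_
  · simpa using Finset.sum_le_card_nsmul (Finset.range K) a 1 fun k _ => ha_le_one k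
  · simpa only [mul_one_div, h_majorant.tsum_eq]
      using h_tail.tsum_le_tsum h_tail_le h_majorant.summable

lemma probInvGen_nonneg (k : ℕ) : 0 ≤ probInvGen G k := by
  rw [probInvGen]
  positivity

variable [Finite G]

lemma one_sub_probInvGen (k : ℕ) :
    1 - probInvGen G k = {f : Fin k → G | ¬ InvGen G f}.ncard / (Nat.card G : ℝ) ^ k := by
  have h_compl : ({f : Fin k → G | InvGen G f}.ncard : ℝ) + {f : Fin k → G | ¬ InvGen G f}.ncard =
      (Nat.card G : ℝ) ^ k := by
    have h := ncard_add_ncard_compl {f : Fin k → G | InvGen G f}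
    rw [Nat.card_fun, Nat.card_fin] at h
    exact_mod_cast h
  have h_pos : (0 : ℝ) < (Nat.card G : ℝ) ^ k := pow_pos (by exact_mod_cast Nat.card_pos) k
  rw [probInvGen, eq_div_iff h_pos.ne', sub_mul, one_mul, div_mul_cancel₀ _ h_pos.ne',
    sub_eq_iff_eq_add', ← h_compl]
  rfl

lemma one_sub_probInvGen_nonneg (k : ℕ) : 0 ≤ 1 - probInvGen G k := by
  rw [one_sub_probInvGen]
  positivity

lemma one_sub_probInvGen_le {t : ℝ} (ht : t ≤ Nat.card G) {E : Set G}
    (hE : ∀ M : Subgroup G, M ≠ ⊤ →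
      t ≤ (derangementSet G (G ⧸ M)).ncard ∨ derangementSet G (G ⧸ M) = E) (k : ℕ) :
    1 - probInvGen G k ≤ Nat.card (Subgroup G) * (1 - t / Nat.card G) ^ k +
      (1 - E.ncard / Nat.card G) ^ k := by
  have h_card_pos : (0 : ℝ) < Nat.card G := by exact_mod_cast Nat.card_pos
  have := Fintype.ofFinite (Subgroup G)
  classical
  let avoiding (D : Set G) : Set (Fin k → G) := univ.pi fun _ => Dᶜ
  let large := Finset.univ.filter fun M : Subgroup G => t ≤ (derangementSet G (G ⧸ M)).ncard
  have h_subset : {f : Fin k → G | ¬ InvGen G f} ⊆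
      (⋃ M ∈ large, avoiding (derangementSet G (G ⧸ M))) ∪ avoiding E := by
    intro f hf
    rw [mem_ofPred_eq, invGen_iff_forall_exists_mem_derangementSet] at hf
    push Not at hf
    obtain ⟨M, hM, hfM⟩ := hf
    rcases hE M hM with h_large | rfl
    · exact .inl (mem_biUnion (by simpa [large] using h_large) fun i _ => hfM i)
    · exact .inr fun i _ => hfM i
  have h_union : ({f : Fin k → G | ¬ InvGen G f}.ncard : ℝ) ≤
      (⋃ M ∈ large, avoiding (derangementSet G (G ⧸ M))).ncard + (avoiding E).ncard := by
    exact_mod_cast (ncard_le_ncard h_subset).trans (ncard_union_le _ _)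
  have h_one_sub_nonneg : 0 ≤ 1 - t / Nat.card G := sub_nonneg.2 ((div_le_one h_card_pos).2 ht)
  calc 1 - probInvGen G k
      ≤ ((⋃ M ∈ large, avoiding (derangementSet G (G ⧸ M))).ncard + (avoiding E).ncard) /
          (Nat.card G : ℝ) ^ k := by rw [one_sub_probInvGen]; gcongr
    _ ≤ large.card * (1 - t / Nat.card G) ^ k + (1 - E.ncard / Nat.card G) ^ k := by
        rw [add_div, ncard_univ_pi_compl_div_card_pow]
        gcongr
        exact ncard_biUnion_univ_pi_compl_div_card_pow_le large _
          (fun M hM => (Finset.mem_filter.1 hM).2) k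
    _ ≤ Nat.card (Subgroup G) * (1 - t / Nat.card G) ^ k + (1 - E.ncard / Nat.card G) ^ k := by
        gcongr
        rw [Nat.card_eq_fintype_card]
        exact Finset.card_le_univ large

lemma cheb_le {t : ℝ} (ht_pos : 0 < t) (ht : t ≤ Nat.card G) {E : Set G} (hE_nonempty : E.Nonempty)
    (hE : ∀ M : Subgroup G, M ≠ ⊤ →
      t ≤ (derangementSet G (G ⧸ M)).ncard ∨ derangementSet G (G ⧸ M) = E) (K : ℕ) :
    cheb G ≤ K + Nat.card (Subgroup G) * (1 - t / Nat.card G) ^ K / (t / Nat.card G) +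
      Nat.card G / E.ncard := by
  have h_card_pos : (0 : ℝ) < Nat.card G := by exact_mod_cast Nat.card_pos
  have hE_pos : (0 : ℝ) < E.ncard := by exact_mod_cast (ncard_pos (toFinite _)).2 hE_nonempty
  have hE_le : (E.ncard : ℝ) ≤ Nat.card G := by exact_mod_cast ncard_le_card E
  rw [cheb, ← one_div_div (E.ncard : ℝ)]
  exact tsum_le_of_le_geometric_add_geometric one_sub_probInvGen_nonneg
    (fun k => sub_le_self 1 (probInvGen_nonneg k)) (div_pos ht_pos h_card_pos)
    ((div_le_one h_card_pos).2 ht) (div_pos hE_pos h_card_pos) ((div_le_one h_card_pos).2 hE_le)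
    (one_sub_probInvGen_le ht hE) K

end Probability

section Asymptotics

open Filter Real

lemma eventually_mul_rpow_lt_pow_six {s : ℝ} (hs : 0 ≤ s) (hs_lt : s < 6 / 11) :
    ∀ᶠ x : ℝ in atTop, 243 * (x ^ s) ^ 10 * (x ^ s + 1) < x ^ 6 := by
  filter_upwards [(tendsto_rpow_atTop (y := 6 - 11 * s) (by linarith)).eventually_gt_atTop 486,
    eventually_ge_atTop 1] with x hx hx_one
  have hx_pos : 0 < x := by linarith
  have h_one_le : 1 ≤ x ^ s := one_le_rpow hx_one hs
  calc 243 * (x ^ s) ^ 10 * (x ^ s + 1) ≤ 243 * (x ^ s) ^ 10 * (x ^ s + x ^ s) := by gcongr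
    _ = (x ^ s) ^ 11 * 486 := by ring
    _ < (x ^ s) ^ 11 * x ^ (6 - 11 * s) := by gcongr
    _ = x ^ 6 := by
      rw [← rpow_mul_natCast hx_pos.le, ← rpow_add hx_pos, ← rpow_natCast]
      norm_num [mul_comm]

lemma eventually_pow_log_add_one_le_exp_rpow {ε r : ℝ} (hε : 0 < ε) (hr : 0 < r) :
    ∀ᶠ n : ℕ in atTop, (n : ℝ) ^ (Nat.log 2 n + 1) ≤ exp (ε * (n : ℝ) ^ r) := by
  have h_isLittleO := tendsto_natCast_atTop_atTop.eventually
    ((isLittleO_log_rpow_rpow_atTop 2 hr).bound (c := ε / 3) (by positivity))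
  filter_upwards [h_isLittleO, eventually_ge_atTop 3] with n h_log_sq hn
  have hn_three : (3 : ℝ) ≤ n := by exact_mod_cast hn
  have hn_pos : (0 : ℝ) < n := by linarith
  have h_one_le_log : 1 ≤ log n := by
    rw [le_log_iff_exp_le hn_pos]
    linarith [exp_one_lt_three]
  have h_natLog_le : (Nat.log 2 n : ℝ) ≤ 2 * log n := by
    refine (natLog_le_logb n 2).trans ?_
    rw [Nat.cast_ofNat, logb, div_le_iff₀ (log_pos one_lt_two)]
    nlinarith [log_two_gt_d9]
  rw [norm_of_nonneg (by positivity), norm_of_nonneg (by positivity), rpow_two] at h_log_sq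
  rw [← log_le_iff_le_exp (by positivity), log_pow]
  push_cast
  nlinarith

lemma eventually_pow_log_mul_one_sub_pow_div_le_one {ε s : ℝ} (hε : 0 < ε) (hs : 1 / 2 < s)
    (hs_le : s ≤ 1) :
    ∀ᶠ n : ℕ in atTop, (n : ℝ) ^ Nat.log 2 n * (1 - (n : ℝ) ^ s / n) ^ ⌈ε * √n⌉₊ /
      ((n : ℝ) ^ s / n) ≤ 1 := by
  filter_upwards [eventually_pow_log_add_one_le_exp_rpow hε (sub_pos.2 hs), eventually_ge_atTop 1]
    with n h_pow_le hn
  have hn_one : (1 : ℝ) ≤ n := by exact_mod_cast hn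
  have hn_pos : (0 : ℝ) < n := by linarith
  have h_rpow_le : (n : ℝ) ^ s / n ≤ 1 := by
    rw [div_le_one hn_pos]
    exact rpow_le_self_of_one_le hn_one hs_le
  have h_exponent : ε * √n * ((n : ℝ) ^ s / n) = ε * (n : ℝ) ^ (s - 1 / 2) := by
    rw [sqrt_eq_rpow, ← rpow_sub_one hn_pos.ne', mul_assoc, ← rpow_add hn_pos]
    ring_nf
  have h_decay : (1 - (n : ℝ) ^ s / n) ^ ⌈ε * √n⌉₊ ≤ exp (-(ε * (n : ℝ) ^ (s - 1 / 2))) := by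
    calc (1 - (n : ℝ) ^ s / n) ^ ⌈ε * √n⌉₊ ≤ exp (-((n : ℝ) ^ s / n)) ^ ⌈ε * √n⌉₊ :=
          pow_le_pow_left₀ (sub_nonneg.2 h_rpow_le) (one_sub_le_exp_neg _) _
      _ = exp (-(⌈ε * √n⌉₊ * ((n : ℝ) ^ s / n))) := by rw [← exp_nat_mul, mul_neg]
      _ ≤ exp (-(ε * (n : ℝ) ^ (s - 1 / 2))) := by
        rw [← h_exponent]
        gcongr
        exact Nat.le_ceil _
  calc (n : ℝ) ^ Nat.log 2 n * (1 - (n : ℝ) ^ s / n) ^ ⌈ε * √n⌉₊ / ((n : ℝ) ^ s / n)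
      ≤ (n : ℝ) ^ Nat.log 2 n * exp (-(ε * (n : ℝ) ^ (s - 1 / 2))) / (1 / n) := by
        gcongr
        exact one_le_rpow hn_one (by linarith)
    _ = (n : ℝ) ^ (Nat.log 2 n + 1) / exp (ε * (n : ℝ) ^ (s - 1 / 2)) := by
        rw [exp_neg, pow_succ]
        field_simp
    _ ≤ 1 := (div_le_one (exp_pos _)).2 h_pow_le

end Asymptotics

section ChebotarevInvariant

open Filter MulAction

lemma div_le_sqrt_add_one {x e : ℝ} (hx : 0 ≤ x) (he : 0 < e) (hxe : x ≤ e * (e + 1)) :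
    x / e ≤ √x + 1 := by
  rcases le_total e (√x) with h | h
  · calc x / e ≤ e + 1 := (div_le_iff₀' he).2 hxe
      _ ≤ √x + 1 := by gcongr
  · rw [div_le_iff₀ he]
    nlinarith [Real.mul_self_sqrt hx, Real.sqrt_nonneg x]

variable [Finite G]

lemma card_le_ncard_derangementSet_quotient_mul {M : Subgroup G} (hM : M ≠ ⊤) :
    Nat.card G ≤ (derangementSet G (G ⧸ M)).ncard * ((derangementSet G (G ⧸ M)).ncard + 1) :=
  have := QuotientGroup.nontrivial_iff.2 hM
  card_le_ncard_derangementSet_mul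

lemma ncard_derangementSet_quotient_pos {M : Subgroup G} (hM : M ≠ ⊤) :
    0 < (derangementSet G (G ⧸ M)).ncard :=
  Nat.pos_of_mul_pos_right (Nat.card_pos.trans_le (card_le_ncard_derangementSet_quotient_mul hM))

lemma exists_forall_le_ncard_or_derangementSet_eq {t : ℝ} (ht : 0 ≤ t)
    (ht_lt : 243 * t ^ 10 * (t + 1) < (Nat.card G : ℝ) ^ 6) :
    ∃ E : Set G, E.Nonempty ∧ Nat.card G ≤ E.ncard * (E.ncard + 1) ∧ ∀ M : Subgroup G, M ≠ ⊤ →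
      t ≤ (derangementSet G (G ⧸ M)).ncard ∨ derangementSet G (G ⧸ M) = E := by
  by_cases! h_large : ∀ M : Subgroup G, M ≠ ⊤ → t ≤ (derangementSet G (G ⧸ M)).ncard
  · refine ⟨Set.univ, Set.univ_nonempty, ?_, fun M hM => .inl (h_large M hM)⟩
    rw [Set.ncard_univ]
    exact Nat.le_mul_of_pos_right _ (Nat.succ_pos _)
  obtain ⟨M₀, hM₀, h_lt₀⟩ := h_large
  have h_floor : 243 * ⌊t⌋₊ ^ 10 * (⌊t⌋₊ + 1) < Nat.card G ^ 6 := by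
    have : 243 * (⌊t⌋₊ : ℝ) ^ 10 * (⌊t⌋₊ + 1) < (Nat.card G : ℝ) ^ 6 := by
      refine lt_of_le_of_lt ?_ ht_lt
      have := Nat.floor_le ht
      gcongr
    exact_mod_cast this
  have h_subset {M N : Subgroup G} (hM : M ≠ ⊤)
      (hM_lt : ((derangementSet G (G ⧸ M)).ncard : ℝ) < t)
      (hN_lt : ((derangementSet G (G ⧸ N)).ncard : ℝ) < t) :
      derangementSet G (G ⧸ N) ⊆ derangementSet G (G ⧸ M) :=
    have := QuotientGroup.nontrivial_iff.2 hM
    derangementSet_subset_of_ncard_le (Nat.le_floor hM_lt.le) (Nat.le_floor hN_lt.le) h_floor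
  refine ⟨derangementSet G (G ⧸ M₀), Set.nonempty_of_ncard_ne_zero
    (ncard_derangementSet_quotient_pos hM₀).ne', card_le_ncard_derangementSet_quotient_mul hM₀,
    fun M hM => (le_or_gt t _).imp_right fun h_lt => ?_⟩
  exact (h_subset hM₀ h_lt₀ h_lt).antisymm (h_subset hM h_lt h_lt₀)

lemma cheb_le_add_sqrt_add_one {t : ℝ} (ht_pos : 0 < t) (ht_le : t ≤ Nat.card G)
    (ht_lt : 243 * t ^ 10 * (t + 1) < (Nat.card G : ℝ) ^ 6) (K : ℕ) :
    cheb G ≤ K + Nat.card (Subgroup G) * (1 - t / Nat.card G) ^ K / (t / Nat.card G) +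
      (√(Nat.card G) + 1) := by
  obtain ⟨E, hE_nonempty, h_card_le, hE⟩ :=
    exists_forall_le_ncard_or_derangementSet_eq ht_pos.le ht_lt
  refine (cheb_le ht_pos ht_le hE_nonempty hE K).trans ?_
  gcongr
  exact div_le_sqrt_add_one (Nat.cast_nonneg _)
    (by exact_mod_cast (Set.ncard_pos (Set.toFinite E)).2 hE_nonempty) (by exact_mod_cast h_card_le)

lemma cheb_le_card_subgroup_mul_card_add_one :
    cheb G ≤ Nat.card (Subgroup G) * Nat.card G + 1 := by
  have h_one_le : (1 : ℝ) ≤ Nat.card G := by exact_mod_cast Nat.card_pos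
  have h := cheb_le one_pos h_one_le Set.univ_nonempty
    (fun M hM => .inl (by exact_mod_cast ncard_derangementSet_quotient_pos (G := G) hM)) 0
  simpa [Set.ncard_univ, div_self (zero_lt_one.trans_le h_one_le).ne'] using h

lemma cheb_le_of_card_le {m : ℕ} (hm : Nat.card G ≤ m) :
    cheb G ≤ (m : ℝ) ^ (Nat.log 2 m + 1) + 1 := by
  have hm_pos : 1 ≤ m := Nat.card_pos.trans_le hm
  have h_card : Nat.card (Subgroup G) * Nat.card G ≤ m ^ (Nat.log 2 m + 1) :=
    calc Nat.card (Subgroup G) * Nat.card G ≤ Nat.card G ^ Nat.log 2 (Nat.card G) * Nat.card G := by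
          gcongr
          exact card_subgroup_le_card_pow_log
      _ ≤ m ^ Nat.log 2 m * m := by gcongr
      _ = m ^ (Nat.log 2 m + 1) := (pow_succ _ _).symm
  refine cheb_le_card_subgroup_mul_card_add_one.trans ?_
  gcongr
  exact_mod_cast h_card

end ChebotarevInvariant

lemma eventually_cheb_le {ε : ℝ} (hε : 0 < ε) :
    ∀ᶠ n : ℕ in Filter.atTop, ∀ (G : Type*) [Group G] [Finite G], Nat.card G = n →
      cheb G ≤ (1 + ε) * √(Nat.card G) + 3 := by
  filter_upwards [tendsto_natCast_atTop_atTop.eventually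
      (eventually_mul_rpow_lt_pow_six (s := 8 / 15) (by norm_num) (by norm_num)),
    eventually_pow_log_mul_one_sub_pow_div_le_one (s := 8 / 15) hε (by norm_num) (by norm_num)]
    with n h_lt h_tail G _ _ rfl
  have h_one_le : (1 : ℝ) ≤ Nat.card G := by exact_mod_cast Nat.card_pos
  have h_pos : (0 : ℝ) < Nat.card G := by linarith
  set t : ℝ := (Nat.card G : ℝ) ^ (8 / 15 : ℝ)
  have ht_pos : 0 < t := Real.rpow_pos_of_pos h_pos _
  have ht_le : t ≤ Nat.card G := Real.rpow_le_self_of_one_le h_one_le (by norm_num)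
  have h_cheb := cheb_le_add_sqrt_add_one ht_pos ht_le h_lt ⌈ε * √(Nat.card G)⌉₊
  have h_subgroups : Nat.card (Subgroup G) * (1 - t / Nat.card G) ^ ⌈ε * √(Nat.card G)⌉₊ /
      (t / Nat.card G) ≤ 1 := by
    refine le_trans ?_ h_tail
    have : 0 ≤ 1 - t / Nat.card G := sub_nonneg.2 ((div_le_one h_pos).2 ht_le)
    gcongr
    exact_mod_cast card_subgroup_le_card_pow_log
  have h_ceil : (⌈ε * √(Nat.card G)⌉₊ : ℝ) ≤ ε * √(Nat.card G) + 1 :=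
    (Nat.ceil_lt_add_one (by positivity)).le
  linarith

/-- **Theorem 1(i)**: for every `ε > 0` there is a constant `c_ε` such that
`C(G) ≤ (1+ε)·√|G| + c_ε` for every finite group `G`. -/
theorem chebotarev_bound_of_eps (ε : ℝ) (hε : 0 < ε) :
    ∃ c : ℝ, ∀ (G : Type*) [Group G] [Finite G],
      cheb G ≤ (1 + ε) * Real.sqrt (Nat.card G) + c := by
  obtain ⟨m, h_large⟩ := Filter.eventually_atTop.1 (eventually_cheb_le hε)
  have h_pow_nonneg : 0 ≤ (m : ℝ) ^ (Nat.log 2 m + 1) := by positivity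
  refine ⟨(m : ℝ) ^ (Nat.log 2 m + 1) + 3, fun G _ _ => ?_⟩
  rcases le_total m (Nat.card G) with hm | hm
  · linarith [h_large _ hm G rfl]
  · have h_sqrt_nonneg : 0 ≤ (1 + ε) * √(Nat.card G) := by positivity
    linarith [cheb_le_of_card_le hm]

end ChebotarevPaper
end

section
/- If G is a finite soluble group, then C(G) ≤ (5/3)·√|G|, with equality if and only if G ≅ C_2 × C_2. -/
/-!
Definitions supporting the formalization of
"An upper bound on the Chebotarev invariant of a finite group" (Lucchini–Tracey).
-/

open scoped BigOperators

namespace ChebotarevPaper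

variable (G : Type*) [Group G]

variable {G}

/-!
For a minimal normal subgroup `N` of a soluble group `G`, a tuple that invariably generates `G ⧸ N`
but not `G` has all its entries in the conjugates of one of the complements of `N`. Summing over
the conjugacy classes of complements and over the length of the tuple bounds `C(G) - C(G ⧸ N)` by
`|N|`, by `h |N| / (|N| - 1)` with `h = |G : C_G(N)|`, and by `|N| - 1` when `|N|` and `|G : N|`
are coprime. As `h ≤ |G : N|`, the geometric mean of the first two bounds is less than
`(5 / 3) (√|N| - 1) √|G : N|` once `|N| ≥ 8`, which is what induction on `|G|` needs. Smaller `N`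
are treated by a case analysis, except when every minimal normal subgroup has order `2` and a
complement; then `G` is an elementary abelian `2`-group and `C(G)` is explicit.
-/

section Proportion

variable {α : Type*}

/-- The probability that a uniformly random element of the finite type `α` lies in `S`. -/
noncomputable def proportion (S : Set α) : ℝ := S.ncard / Nat.card α

theorem proportion_nonneg (S : Set α) : 0 ≤ proportion S := by
  unfold proportion; positivity

theorem proportion_union_le (S T : Set α) : proportion (S ∪ T) ≤ proportion S + proportion T := by
  unfold proportion
  rw [← add_div]
  gcongr
  exact_mod_cast Set.ncard_union_le S T

theorem proportion_iUnion_le {ι : Type*} [Fintype ι] (S : ι → Set α) :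
    proportion (⋃ i, S i) ≤ ∑ i, proportion (S i) := by
  unfold proportion
  rw [← Finset.sum_div, ← Nat.cast_sum]
  gcongr
  simpa using Finset.univ.set_ncard_biUnion_le S

variable [Finite α]

theorem proportion_mono {S T : Set α} (h : S ⊆ T) : proportion S ≤ proportion T := by
  unfold proportion
  gcongr
  exact Set.toFinite T

theorem proportion_le_one (S : Set α) : proportion S ≤ 1 :=
  div_le_one_of_le₀ (mod_cast Set.ncard_le_card S) (Nat.cast_nonneg _)

theorem proportion_union {S T : Set α} (h : Disjoint S T) :
    proportion (S ∪ T) = proportion S + proportion T := by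
  unfold proportion
  rw [Set.ncard_union_eq h, Nat.cast_add, add_div]

theorem proportion_compl (S : Set α) [Nonempty α] : proportion Sᶜ = 1 - proportion S := by
  have huniv : proportion (Set.univ : Set α) = 1 := by
    rw [proportion, Set.ncard_univ, div_self (mod_cast Nat.card_pos.ne')]
  rw [← huniv, ← Set.union_compl_self S, proportion_union disjoint_compl_right, add_sub_cancel_left]

theorem proportion_preimage {G H : Type*} [Group G] [Finite G] [Group H] {φ : G →* H}
    (hφ : Function.Surjective φ) (S : Set H) : proportion (φ ⁻¹' S) = proportion S := by
  let e := QuotientGroup.quotientKerEquivOfSurjective φ hφ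
  have hcard : (φ ⁻¹' S).ncard = Nat.card φ.ker * S.ncard := by
    rw [← Set.ncard_preimage_of_injective_subset_range e.injective
      (e.surjective.range_eq ▸ Set.subset_univ S)]
    exact QuotientGroup.card_preimage_mk φ.ker (e ⁻¹' S)
  have hker : Nat.card G = Nat.card φ.ker * Nat.card H := by
    rw [φ.ker.card_eq_card_quotient_mul_card_subgroup, Nat.card_congr e.toEquiv, mul_comm]
  rw [proportion, proportion, hcard, hker, Nat.cast_mul, Nat.cast_mul,
    mul_div_mul_left _ _ (mod_cast Nat.card_pos.ne')]

variable [Nonempty α]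

theorem proportion_le_mul_of_tail {k : ℕ} {S : Set (Fin (k + 1) → α)} {T : Set (Fin k → α)} {u : ℝ}
    (htail : ∀ f ∈ S, Fin.tail f ∈ T)
    (hhead : ∀ t ∈ T, proportion {a | Fin.cons a t ∈ S} ≤ u) :
    proportion S ≤ u * proportion T := by
  classical
  have hcover : S ⊆ ⋃ t ∈ T.toFinite.toFinset,
      (fun a => (Fin.cons a t : Fin (k + 1) → α)) '' {a | Fin.cons a t ∈ S} := by
    intro f hf
    simp only [Set.mem_iUnion, Set.Finite.mem_toFinset]
    exact ⟨Fin.tail f, htail f hf, f 0, by simpa using hf, Fin.cons_self_tail f⟩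
  have hcard : (S.ncard : ℝ) ≤ T.ncard * (u * Nat.card α) := calc
    (S.ncard : ℝ) ≤ ∑ t ∈ T.toFinite.toFinset, ({a | Fin.cons a t ∈ S}.ncard : ℝ) := by
      refine mod_cast (Set.ncard_le_ncard hcover (Set.toFinite _)).trans
        ((Finset.set_ncard_biUnion_le _ _).trans ?_)
      exact Finset.sum_le_sum fun t _ => Set.ncard_image_le (Set.toFinite _)
    _ ≤ T.toFinite.toFinset.card • (u * Nat.card α) := by
      refine Finset.sum_le_card_nsmul _ _ _ fun t ht => ?_
      exact (div_le_iff₀ (mod_cast Nat.card_pos)).1 (hhead t (by simpa using ht))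
    _ = T.ncard * (u * Nat.card α) := by
      rw [← Set.ncard_eq_toFinset_card T, nsmul_eq_mul]
  have hpos : (0 : ℝ) < Nat.card α := mod_cast Nat.card_pos
  rw [proportion, proportion, Nat.card_fun, Nat.card_fun, Nat.card_fin, Nat.card_fin,
    Nat.cast_pow, Nat.cast_pow, div_le_iff₀ (by positivity)]
  calc (S.ncard : ℝ) ≤ T.ncard * (u * Nat.card α) := hcard
    _ = u * (T.ncard / (Nat.card α : ℝ) ^ k) * (Nat.card α : ℝ) ^ (k + 1) := by
      field_simp
      ring

theorem proportion_pi_le_pow (W : Set α) (k : ℕ) :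
    proportion {f : Fin k → α | ∀ i, f i ∈ W} ≤ proportion W ^ k := by
  induction k with
  | zero => simpa using proportion_le_one _
  | succ k ih =>
    rw [pow_succ']
    refine (proportion_le_mul_of_tail (T := {f | ∀ i, f i ∈ W}) ?_ fun t _ => ?_).trans
      (mul_le_mul_of_nonneg_left ih (proportion_nonneg W))
    · exact fun f (hf : ∀ i, f i ∈ W) i => hf i.succ
    · exact proportion_mono fun a (ha : ∀ i, (Fin.cons a t : Fin (k + 1) → α) i ∈ W) => ha 0

end Proportion

section FixedPoints

open MulAction

theorem sum_card_fixedBy_eq_card (G Ω : Type*) [Group G] [Fintype G] [MulAction G Ω]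
    [IsPretransitive G Ω] [Nonempty Ω] [∀ g : G, Fintype (fixedBy Ω g)] :
    ∑ g : G, Fintype.card (fixedBy Ω g) = Fintype.card G := by
  have := ((pretransitive_iff_unique_quotient_of_nonempty G Ω).1 inferInstance).some
  rw [sum_card_fixedBy_eq_card_orbits_mul_card_group G Ω, Fintype.card_unique, one_mul]

theorem two_mul_card_le_sum_card_fixedBy_sq (G Ω : Type*) [Group G] [Fintype G] [MulAction G Ω]
    [Finite Ω] [Nontrivial Ω] [∀ g : G, Fintype (fixedBy Ω g)] :
    2 * Fintype.card G ≤ ∑ g : G, Fintype.card (fixedBy Ω g) ^ 2 := by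
  classical
  have := Fintype.ofFinite Ω
  have hsq (g : G) : Fintype.card (fixedBy (Ω × Ω) g) = Fintype.card (fixedBy Ω g) ^ 2 := by
    rw [sq, ← Fintype.card_prod]
    refine Fintype.card_congr ((Equiv.setCongr ?_).trans (Equiv.Set.prod _ _))
    ext ⟨a, b⟩
    simp [mem_fixedBy]
  have horbits : 1 < Fintype.card (Quotient (orbitRel G (Ω × Ω))) := by
    obtain ⟨a, b, hab⟩ := exists_pair_ne Ω
    refine Fintype.one_lt_card_iff.2 ⟨⟦(a, a)⟧, ⟦(a, b)⟧, fun h => hab ?_⟩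
    obtain ⟨g, hg⟩ := Quotient.exact h
    simp only [Prod.smul_mk, Prod.mk.injEq] at hg
    exact smul_left_cancel g (hg.1.trans hg.2.symm)
  simp only [← hsq, sum_card_fixedBy_eq_card_orbits_mul_card_group G (Ω × Ω)]
  gcongr
  exact horbits

/-- The derangement bound of Cameron and Cohen. With `fix g` the number of fixed points of `g` and
`n = |Ω|`, the product `(fix g - 1) * (n - fix g)` is negative only at derangements, where it
is `-n`, while Burnside's lemma on points and on pairs computes its sum over `g`. -/
theorem proportion_fixedBy_nonempty_le (G Ω : Type*) [Group G] [Finite G] [MulAction G Ω]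
    [IsPretransitive G Ω] [Finite Ω] [Nontrivial Ω] :
    proportion {g : G | (fixedBy Ω g).Nonempty} ≤ 1 - 1 / Nat.card Ω := by
  classical
  have := Fintype.ofFinite G
  have := Fintype.ofFinite Ω
  have hpoints : ∑ g : G, (Fintype.card (fixedBy Ω g) : ℝ) = Fintype.card G :=
    mod_cast sum_card_fixedBy_eq_card G Ω
  have hpairs : (2 * Fintype.card G : ℝ) ≤ ∑ g : G, (Fintype.card (fixedBy Ω g) : ℝ) ^ 2 :=
    mod_cast two_mul_card_le_sum_card_fixedBy_sq G Ω
  have hterm (g : G) : (if (fixedBy Ω g).Nonempty then (Fintype.card Ω : ℝ) else 0) ≤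
      (Fintype.card Ω + 1) * Fintype.card (fixedBy Ω g) - (Fintype.card (fixedBy Ω g) : ℝ) ^ 2 := by
    split_ifs with hg
    · have hpos : (1 : ℝ) ≤ Fintype.card (fixedBy Ω g) :=
        mod_cast Fintype.card_pos_iff.2 hg.to_subtype
      have hle : (Fintype.card (fixedBy Ω g) : ℝ) ≤ Fintype.card Ω :=
        mod_cast set_fintype_card_le_univ (fixedBy Ω g)
      linarith [mul_nonneg (sub_nonneg.2 hpos) (sub_nonneg.2 hle)]
    · simp [Set.not_nonempty_iff_eq_empty.1 hg]
  have hcount : ({g : G | (fixedBy Ω g).Nonempty}.ncard : ℝ) * Fintype.card Ω ≤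
      (Fintype.card Ω - 1) * Fintype.card G := calc
    _ = ∑ g : G, if (fixedBy Ω g).Nonempty then (Fintype.card Ω : ℝ) else 0 := by
      rw [← Finset.sum_filter, Finset.sum_const, nsmul_eq_mul, Set.ncard_eq_toFinset_card',
        Set.toFinset_ofPred]
    _ ≤ ∑ g : G, ((Fintype.card Ω + 1) * Fintype.card (fixedBy Ω g)
        - (Fintype.card (fixedBy Ω g) : ℝ) ^ 2) := Finset.sum_le_sum fun g _ => hterm g
    _ ≤ (Fintype.card Ω - 1) * Fintype.card G := by
      rw [Finset.sum_sub_distrib, ← Finset.mul_sum, hpoints]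
      linarith
  have hΩ : (0 : ℝ) < Fintype.card Ω := mod_cast Fintype.card_pos
  rw [proportion, Nat.card_eq_fintype_card, Nat.card_eq_fintype_card,
    div_le_iff₀ (mod_cast Fintype.card_pos)]
  calc ({g : G | (fixedBy Ω g).Nonempty}.ncard : ℝ)
      ≤ (Fintype.card Ω - 1) * Fintype.card G / Fintype.card Ω := (le_div_iff₀ hΩ).2 hcount
    _ = (1 - 1 / Fintype.card Ω) * Fintype.card G := by field_simp

theorem mem_conjugatesOfSet_iff {M : Subgroup G} {g : G} :
    g ∈ Group.conjugatesOfSet (M : Set G) ↔ ∃ x, x * g * x⁻¹ ∈ M := by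
  simp only [Group.mem_conjugatesOfSet_iff, SetLike.mem_coe]
  constructor
  · rintro ⟨a, ha, hag⟩
    obtain ⟨x, rfl⟩ := isConj_iff.1 hag.symm
    exact ⟨x, ha⟩
  · rintro ⟨x, hx⟩
    exact ⟨_, hx, (isConj_iff.2 ⟨x, rfl⟩).symm⟩

theorem conjugatesOfSet_eq_fixedBy_nonempty (M : Subgroup G) :
    Group.conjugatesOfSet (M : Set G) = {g : G | (fixedBy (G ⧸ M) g).Nonempty} := by
  ext g
  rw [mem_conjugatesOfSet_iff]
  constructor
  · rintro ⟨x, hx⟩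
    refine ⟨(x⁻¹ : G), ?_⟩
    rw [mem_fixedBy, Quotient.smul_coe, smul_eq_mul, eq_comm, QuotientGroup.eq, inv_inv,
      ← mul_assoc]
    exact hx
  · rintro ⟨y, hy⟩
    obtain ⟨x, rfl⟩ := QuotientGroup.mk_surjective y
    rw [mem_fixedBy, Quotient.smul_coe, smul_eq_mul, eq_comm, QuotientGroup.eq, ← mul_assoc] at hy
    exact ⟨x⁻¹, by rwa [inv_inv]⟩

theorem proportion_conjugatesOfSet_le [Finite G] {M : Subgroup G}
    (hM : M ≠ ⊤) :
    proportion (Group.conjugatesOfSet (M : Set G)) ≤ 1 - 1 / M.index := by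
  have : Nontrivial (G ⧸ M) := by
    rw [QuotientGroup.nontrivial_iff]
    exact hM
  rw [conjugatesOfSet_eq_fixedBy_nonempty]
  exact proportion_fixedBy_nonempty_le G (G ⧸ M)

end FixedPoints

section InvariableGeneration

variable {k : ℕ}

theorem not_invGen_iff {f : Fin k → G} :
    ¬ InvGen G f ↔
      ∃ M : Subgroup G, M ≠ ⊤ ∧ ∀ i, f i ∈ Group.conjugatesOfSet (M : Set G) := by
  simp only [mem_conjugatesOfSet_iff]
  constructor
  · intro hf
    obtain ⟨c, hc⟩ := not_forall.1 hf
    exact ⟨_, hc, fun i => ⟨c i, Subgroup.subset_closure ⟨i, rfl⟩⟩⟩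
  · rintro ⟨M, hM, hmem⟩ hf
    choose c hc using hmem
    refine hM (top_le_iff.1 (hf c ▸ (Subgroup.closure_le M).2 ?_))
    exact Set.range_subset_iff.2 hc

theorem InvGen.map {H : Type*} [Group H] {φ : G →* H} (hφ : Function.Surjective φ)
    {f : Fin k → G} (hf : InvGen G f) : InvGen H (fun i => φ (f i)) := by
  intro c
  choose d hd using fun i => hφ (c i)
  rw [← Subgroup.map_top_of_surjective φ hφ, ← hf d, MonoidHom.map_closure, ← Set.range_comp]
  simp only [Function.comp_def, map_mul, map_inv, hd]

theorem InvGen.of_tail {f : Fin (k + 1) → G} (hf : InvGen G (Fin.tail f)) : InvGen G f := by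
  refine fun c => top_le_iff.1 (hf (fun i => c i.succ) ▸ Subgroup.closure_mono ?_)
  exact Set.range_subset_iff.2 fun i => ⟨i.succ, rfl⟩

theorem invGen_iff_closure_eq_top {G : Type*} [CommGroup G] {k : ℕ} {f : Fin k → G} :
    InvGen G f ↔ Subgroup.closure (Set.range f) = ⊤ := by
  simp [InvGen, mul_inv_cancel_comm]

variable (G k) in
/-- The `k`-tuples that do not invariably generate `G`. The Chebotarev invariant sums their
probabilities. -/
def nonInvGen : Set (Fin k → G) := {f | ¬ InvGen G f}

theorem cheb_eq_tsum [Finite G] : cheb G = ∑' k, proportion (nonInvGen G k) := by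
  refine tsum_congr fun k => ?_
  have : probInvGen G k = proportion {f : Fin k → G | InvGen G f} := by
    rw [proportion, Nat.card_fun, Nat.card_fin, Nat.cast_pow]
    rfl
  rw [this, ← proportion_compl]
  rfl

theorem summable_proportion_nonInvGen [Finite G] :
    Summable fun k => proportion (nonInvGen G k) := by
  classical
  have := Fintype.ofFinite {M : Subgroup G // M ≠ ⊤}
  have hgeom (M : {M : Subgroup G // M ≠ ⊤}) :
      Summable fun k => proportion (Group.conjugatesOfSet (M.1 : Set G)) ^ k := by
    refine summable_geometric_of_lt_one (proportion_nonneg _)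
      ((proportion_conjugatesOfSet_le M.2).trans_lt (sub_lt_self _ ?_))
    have := M.1.index_ne_zero_of_finite
    positivity
  refine Summable.of_nonneg_of_le (fun k => proportion_nonneg _) (fun k => ?_)
    (summable_sum fun M (_ : M ∈ Finset.univ) => hgeom M)
  calc proportion (nonInvGen G k)
      ≤ proportion (⋃ M : {M : Subgroup G // M ≠ ⊤},
          {f : Fin k → G | ∀ i, f i ∈ Group.conjugatesOfSet (M.1 : Set G)}) := by
        refine proportion_mono fun f hf => ?_
        obtain ⟨M, hM, hmem⟩ := not_invGen_iff.1 hf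
        exact Set.mem_iUnion.2 ⟨⟨M, hM⟩, hmem⟩
    _ ≤ ∑ M : {M : Subgroup G // M ≠ ⊤}, proportion (Group.conjugatesOfSet (M.1 : Set G)) ^ k :=
      (proportion_iUnion_le _).trans (Finset.sum_le_sum fun M _ => proportion_pi_le_pow _ k)

theorem proportion_invGen_and_not_tail [Finite G] :
    proportion {f : Fin (k + 1) → G | InvGen G f ∧ ¬ InvGen G (Fin.tail f)} =
      proportion (nonInvGen G k) - proportion (nonInvGen G (k + 1)) := by
  let φ : (Fin (k + 1) → G) →* (Fin k → G) :=
    MonoidHom.pi fun i => Pi.evalMonoidHom (fun _ => G) i.succ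
  have hφ : Function.Surjective φ := fun f => ⟨Fin.cons 1 f, rfl⟩
  rw [eq_sub_iff_add_eq, ← proportion_union, ← proportion_preimage hφ]
  · congr 1
    ext f
    have htail : InvGen G (φ f) → InvGen G f := InvGen.of_tail
    change InvGen G f ∧ ¬ InvGen G (φ f) ∨ ¬ InvGen G f ↔ ¬ InvGen G (φ f)
    tauto
  · exact Set.disjoint_left.2 fun f hf hf' => hf' hf.1

variable (N : Subgroup G) [N.Normal]

/-- The `k`-tuples that invariably generate `G` modulo `N`, but do not invariably generate `G`. -/
def invGenOnlyModulo (k : ℕ) : Set (Fin k → G) :=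
  {f | InvGen (G ⧸ N) (fun i => (f i : G ⧸ N)) ∧ ¬ InvGen G f}

theorem proportion_preimage_quotientMk [Finite G] (S : Set (Fin k → G ⧸ N)) :
    proportion {f : Fin k → G | (fun i => (f i : G ⧸ N)) ∈ S} = proportion S :=
  proportion_preimage (φ := (QuotientGroup.mk' N).compLeft (Fin k))
    (QuotientGroup.mk'_surjective N).comp_left S

theorem proportion_nonInvGen_eq_add [Finite G] :
    proportion (nonInvGen G k) =
      proportion (nonInvGen (G ⧸ N) k) + proportion (invGenOnlyModulo N k) := by
  rw [← proportion_preimage_quotientMk, ← proportion_union]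
  · congr 1
    ext f
    have hmap : InvGen G f → InvGen (G ⧸ N) (fun i => (f i : G ⧸ N)) :=
      InvGen.map (QuotientGroup.mk'_surjective N)
    simp only [nonInvGen, invGenOnlyModulo, Set.mem_union, Set.mem_ofPred_eq]
    tauto
  · exact Set.disjoint_left.2 fun f hf hf' => hf hf'.1

theorem summable_proportion_invGenOnlyModulo [Finite G] :
    Summable fun k => proportion (invGenOnlyModulo N k) := by
  refine summable_proportion_nonInvGen (G := G) |>.of_nonneg_of_le
    (fun k => proportion_nonneg _) fun k => ?_
  rw [proportion_nonInvGen_eq_add N]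
  exact le_add_of_nonneg_left (proportion_nonneg _)

theorem cheb_eq_add_tsum [Finite G] :
    cheb G = cheb (G ⧸ N) + ∑' k, proportion (invGenOnlyModulo N k) := by
  rw [cheb_eq_tsum, cheb_eq_tsum, ← Summable.tsum_add summable_proportion_nonInvGen
    (summable_proportion_invGenOnlyModulo N)]
  exact tsum_congr fun k => proportion_nonInvGen_eq_add N

end InvariableGeneration

section MinimalNormal

open Subgroup

variable {N : Subgroup G}

theorem exists_isMinimalNormal_le [Finite G] {K : Subgroup G} (hK : K.Normal) (hne : K ≠ ⊥) :
    ∃ N ≤ K, IsMinimalNormal G N := by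
  obtain ⟨N, hNK, hN⟩ := (Set.toFinite {L : Subgroup G | L.Normal ∧ L ≠ ⊥}).exists_le_minimal
    ⟨hK, hne⟩
  exact ⟨N, hNK, hN.prop.1, hN.prop.2, fun M hM hne hMN => le_antisymm hMN (hN.2 ⟨hM, hne⟩ hMN)⟩

theorem exists_isMinimalNormal (G : Type*) [Group G] [Finite G] [Nontrivial G] :
    ∃ N : Subgroup G, IsMinimalNormal G N := by
  obtain ⟨N, -, hN⟩ := exists_isMinimalNormal_le (K := (⊤ : Subgroup G)) inferInstance top_ne_bot
  exact ⟨N, hN⟩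

theorem IsMinimalNormal.le_of_mem (hN : IsMinimalNormal G N) {K : Subgroup G} (hK : K.Normal)
    {x : G} (hx : x ≠ 1) (hxN : x ∈ N) (hxK : x ∈ K) : N ≤ K := by
  have := hN.1
  refine inf_eq_left.1 (hN.2.2 (N ⊓ K) inferInstance (fun hbot => hx ?_) inf_le_left)
  exact mem_bot.1 (hbot ▸ mem_inf.2 ⟨hxN, hxK⟩)

theorem IsMinimalNormal.isMulCommutative [Group.IsSolvable G] (hN : IsMinimalNormal G N) :
    IsMulCommutative N := by
  have := hN.1
  have hlt := Group.IsSolvable.commutator_lt_of_ne_bot hN.2.1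
  rw [← commutator_self_eq_bot_iff]
  by_contra hne
  exact hlt.ne (hN.2.2 _ inferInstance hne hlt.le)

theorem IsMinimalNormal.exists_prime_pow_eq_one [Finite G] [IsMulCommutative N]
    (hN : IsMinimalNormal G N) :
    ∃ p : ℕ, p.Prime ∧ p ∣ Nat.card N ∧ ∀ x ∈ N, x ^ p = 1 := by
  have := hN.1
  have hcard : Nat.card N ≠ 1 := fun h => hN.2.1 (card_eq_one.1 h)
  obtain ⟨p, hp, hdvd⟩ := Nat.exists_prime_and_dvd hcard
  have := Fact.mk hp
  obtain ⟨x, hx⟩ := exists_prime_orderOf_dvd_card' p hdvd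
  let T : Subgroup G :=
    { carrier := {y | y ∈ N ∧ y ^ p = 1}
      mul_mem' := fun {a b} ⟨ha, ha'⟩ ⟨hb, hb'⟩ => ⟨N.mul_mem ha hb, by
        rw [Commute.mul_pow (setLike_mul_comm ha hb), ha', hb', one_mul]⟩
      one_mem' := ⟨N.one_mem, one_pow p⟩
      inv_mem' := fun {a} ⟨ha, ha'⟩ => ⟨N.inv_mem ha, by rw [inv_pow, ha', inv_one]⟩ }
  have hT : T.Normal := ⟨fun y ⟨hy, hy'⟩ g => ⟨hN.1.conj_mem y hy g, by
    rw [conj_pow, hy', mul_one, mul_inv_cancel]⟩⟩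
  have hxp : (x : G) ^ p = 1 := mod_cast hx ▸ pow_orderOf_eq_one x
  have hx1 : (x : G) ≠ 1 := fun h => hp.one_lt.ne' (by rw [← hx, ← orderOf_coe, h, orderOf_one])
  exact ⟨p, hp, hdvd, fun y hy => (hN.le_of_mem hT hx1 x.2 ⟨x.2, hxp⟩ hy).2⟩

theorem IsMinimalNormal.isPrimePow_card [Finite G] [Group.IsSolvable G]
    (hN : IsMinimalNormal G N) : IsPrimePow (Nat.card N) := by
  have := hN.isMulCommutative
  obtain ⟨p, hp, hdvd, hpow⟩ := hN.exists_prime_pow_eq_one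
  have := Fact.mk hp
  have hgroup : IsPGroup p N := fun x =>
    ⟨1, Subtype.ext (by rw [pow_one, N.coe_pow, hpow x x.2, N.coe_one])⟩
  obtain ⟨n, hn⟩ := IsPGroup.iff_card.1 hgroup
  have hn0 : n ≠ 0 := by
    rintro rfl
    rw [hn, pow_zero] at hdvd
    exact hp.not_dvd_one hdvd
  exact (isPrimePow_nat_iff _).2 ⟨p, n, hp, Nat.pos_of_ne_zero hn0, hn.symm⟩

/-- The `p`-group `L / centralizer N` fixes a nontrivial element of the `p`-group `N`, and the fixed
points form a normal subgroup. -/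
theorem IsMinimalNormal.le_centralizer_of_pow_mem [Finite G] (hN : IsMinimalNormal G N) {p : ℕ}
    (hp : p.Prime) (hdvd : p ∣ Nat.card N) {L : Subgroup G} (hL : L.Normal)
    (hpow : ∀ x ∈ L, ∃ k, x ^ p ^ k ∈ centralizer (N : Set G)) : L ≤ centralizer (N : Set G) := by
  have := hN.1
  have := Fact.mk hp
  let φ : G →* MulAut N := MulAut.conjNormal
  have hP : IsPGroup p (L.map φ) := by
    rintro ⟨_, x, hx, rfl⟩
    obtain ⟨k, hk⟩ := hpow x hx
    refine ⟨k, Subtype.ext (MulEquiv.ext fun n => Subtype.ext ?_)⟩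
    simp only [coe_pow, ← map_pow, φ, MulAut.conjNormal_apply, coe_one,
      MulAut.one_apply]
    exact mul_inv_eq_of_eq_mul (mem_centralizer_iff.1 hk n n.2).symm
  have hone : (1 : N) ∈ MulAction.fixedPoints (L.map φ) N := fun σ => map_one σ.1
  obtain ⟨n, hn, hn1⟩ := hP.exists_fixed_point_of_prime_dvd_card_of_fixed_point N hdvd hone
  have hnL : (n : G) ∈ centralizer (L : Set G) := mem_centralizer_iff.2 fun x hx =>
    mul_inv_eq_iff_eq_mul.1 (congrArg Subtype.val (hn ⟨φ x, mem_map_of_mem φ hx⟩))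
  rw [le_centralizer_iff]
  exact hN.le_of_mem inferInstance (fun h => hn1 (Subtype.ext h.symm)) n.2 hnL

theorem exists_normal_gt_forall_pow_mem [Finite G] [Group.IsSolvable G] {C : Subgroup G}
    [C.Normal] (hC : C ≠ ⊤) :
    ∃ L : Subgroup G, L.Normal ∧ C < L ∧ ∃ r : ℕ, r.Prime ∧ ∀ x ∈ L, x ^ r ∈ C := by
  have := QuotientGroup.nontrivial_iff.2 hC
  obtain ⟨A, hA⟩ := exists_isMinimalNormal (G ⧸ C)
  have := hA.1
  have := hA.isMulCommutative
  obtain ⟨r, hr, -, hpow⟩ := hA.exists_prime_pow_eq_one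
  refine ⟨A.comap (QuotientGroup.mk' C), inferInstance, ?_, r, hr, fun x hx => ?_⟩
  · have h := (comap_lt_comap_of_surjective (QuotientGroup.mk'_surjective C)).2
      (bot_lt_iff_ne_bot.2 hA.2.1)
    rwa [MonoidHom.comap_bot, QuotientGroup.ker_mk'] at h
  · rw [← QuotientGroup.eq_one_iff, QuotientGroup.mk_pow]
    exact hpow _ hx

end MinimalNormal

section Complements

open Subgroup Pointwise

variable {N M M₁ M₂ : Subgroup G} [N.Normal]

theorem exists_mul_eq_of_sup_eq_top (h : M ⊔ N = ⊤) (g : G) : ∃ m ∈ M, ∃ n ∈ N, m * n = g :=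
  mem_sup_of_normal_right.1 (h ▸ mem_top g)

theorem isComplement'_of_isCompl (h : IsCompl M N) : M.IsComplement' N :=
  isComplement'_of_disjoint_and_mul_eq_univ h.disjoint
    (by rw [← mul_normal, h.sup_eq_top, coe_top])

theorem eq_of_le_of_sup_eq_top_of_disjoint (hle : M₁ ≤ M₂) (hsup : M₁ ⊔ N = ⊤)
    (hdisj : Disjoint M₂ N) : M₁ = M₂ := by
  refine le_antisymm hle fun x hx => ?_
  obtain ⟨m, hm, n, hn, rfl⟩ := exists_mul_eq_of_sup_eq_top hsup x
  have hnM : n ∈ M₂ := (M₂.mul_mem_cancel_left (hle hm)).1 hx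
  rwa [disjoint_def.1 hdisj hnM hn, mul_one]

theorem inf_normal_of_sup_eq_top [IsMulCommutative N] (h : M ⊔ N = ⊤) : (M ⊓ N).Normal := by
  refine ⟨fun x hx g => ?_⟩
  obtain ⟨m, hm, n, hn, rfl⟩ := exists_mul_eq_of_sup_eq_top h g
  have hcomm : n * x = x * n := setLike_mul_comm hn hx.2
  have : m * n * x * (m * n)⁻¹ = m * x * m⁻¹ := by
    rw [mul_assoc m n x, hcomm]; group
  rw [this]
  exact ⟨M.mul_mem (M.mul_mem hm hx.1) (M.inv_mem hm), ‹N.Normal›.conj_mem x hx.2 m⟩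

omit [N.Normal] in
theorem IsMinimalNormal.isCompl_of_sup_eq_top [IsMulCommutative N] (hN : IsMinimalNormal G N)
    (hM : M ≠ ⊤) (h : M ⊔ N = ⊤) : IsCompl M N := by
  have := hN.1
  refine IsCompl.of_eq (by_contra fun hne => hM ?_) h
  have hinf := hN.2.2 _ (inf_normal_of_sup_eq_top h) hne inf_le_right
  rwa [sup_eq_left.2 (inf_eq_right.1 hinf)] at h

omit [N.Normal] in
theorem IsMinimalNormal.isCoatom_of_isCompl [IsMulCommutative N] (hN : IsMinimalNormal G N)
    (hM : IsCompl M N) : IsCoatom M := by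
  have := hN.1
  refine ⟨fun h => hN.2.1 ?_, fun L hL => by_contra fun hne => hL.ne ?_⟩
  · rw [← hM.inf_eq_bot, h, top_inf_eq]
  · have hsup : L ⊔ N = ⊤ := top_le_iff.1 (hM.sup_eq_top ▸ sup_le_sup_right hL.le N)
    exact eq_of_le_of_sup_eq_top_of_disjoint hL.le hM.sup_eq_top
      (hN.isCompl_of_sup_eq_top hne hsup).disjoint

theorem isCompl_conj_smul (h : IsCompl M N) (g : G) : IsCompl (MulAut.conj g • M) N := by
  have hsmul : MulAut.conj g • N = N := Normal.conj_smul_eq_self g N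
  refine IsCompl.of_eq ?_ ?_
  · rw [← hsmul, ← smul_inf, h.inf_eq_bot, smul_bot]
  · rw [← hsmul, ← smul_sup, h.sup_eq_top, Normal.conj_smul_eq_self]

theorem normalCore_eq_inf_centralizer (h : IsCompl M N) :
    M.normalCore = M ⊓ centralizer (N : Set G) := by
  refine le_antisymm (le_inf M.normalCore_le fun x hx => ?_) ?_
  · refine mem_centralizer_iff.2 fun n hn => ?_
    exact commute_of_normal_of_disjoint N M.normalCore inferInstance inferInstance
      (h.symm.disjoint.mono_right M.normalCore_le) n x hn hx
  · have : (M ⊓ centralizer (N : Set G)).Normal := by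
      refine ⟨fun x hx g => ?_⟩
      obtain ⟨m, hm, n, hn, rfl⟩ := exists_mul_eq_of_sup_eq_top h.sup_eq_top g
      have hcomm : n * x = x * n := mem_centralizer_iff.1 hx.2 n hn
      have : m * n * x * (m * n)⁻¹ = m * x * m⁻¹ := by
        rw [mul_assoc m n x, hcomm]; group
      rw [this]
      exact ⟨M.mul_mem (M.mul_mem hm hx.1) (M.inv_mem hm),
        (inferInstance : (centralizer (N : Set G)).Normal).conj_mem x hx.2 m⟩
    exact normal_le_normalCore.2 inf_le_left

theorem inf_sup_eq_of_isCompl_of_le (h : IsCompl M N) {L : Subgroup G} (hNL : N ≤ L) :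
    M ⊓ L ⊔ N = L := by
  refine le_antisymm (sup_le inf_le_right hNL) fun x hx => ?_
  obtain ⟨m, hm, n, hn, rfl⟩ := exists_mul_eq_of_sup_eq_top h.sup_eq_top x
  exact mul_mem_sup ⟨hm, (L.mul_mem_cancel_right (hNL hn)).1 hx⟩ hn

omit [N.Normal] in
theorem eq_of_inf_le_of_not_le_centralizer [IsMulCommutative N] (hN : IsMinimalNormal G N)
    (h₁ : IsCompl M₁ N) (h₂ : IsCompl M₂ N) {L : Subgroup G} [L.Normal] (hNL : N ≤ L)
    (hL : ¬ L ≤ centralizer (N : Set G)) (hle : M₁ ⊓ L ≤ M₂) : M₁ = M₂ := by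
  have := hN.1
  by_contra hne
  have hsup : M₁ ⊔ M₂ = ⊤ :=
    (hN.isCoatom_of_isCompl h₁).sup_eq_top_of_ne (hN.isCoatom_of_isCompl h₂) hne
  have hinf : M₁ ⊓ L = M₂ ⊓ L := by
    refine le_antisymm (le_inf hle inf_le_right) fun x hx => ?_
    obtain ⟨m, hm, n, hn, rfl⟩ := mem_sup_of_normal_right.1
      (inf_sup_eq_of_isCompl_of_le h₁ hNL ▸ hx.2)
    have hnM : n ∈ M₂ := (M₂.mul_mem_cancel_left (hle hm)).1 hx.1
    rwa [disjoint_def.1 h₂.disjoint hnM hn, mul_one]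
  have hnormalizes (M : Subgroup G) : M ≤ normalizer (M ⊓ L : Subgroup G) :=
    (le_inf le_normalizer le_normalizer_of_normal).trans inf_normalizer_le_normalizer_inf
  have hnormal : (M₁ ⊓ L).Normal := by
    rw [← normalizer_eq_top_iff, ← top_le_iff, ← hsup]
    exact sup_le (hnormalizes M₁) (hinf ▸ hnormalizes M₂)
  apply hL
  rw [← inf_sup_eq_of_isCompl_of_le h₁ hNL]
  refine sup_le ?_ (le_centralizer N)
  exact (normal_le_normalCore.2 inf_le_left).trans
    ((normalCore_eq_inf_centralizer h₁).trans_le inf_le_right)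

omit [N.Normal] in
theorem exists_le_conj_smul_of_pow_mem {K R : Subgroup G} [K.Normal] (hKM : K ≤ M)
    {r : ℕ} (hr : r.Prime) (hindex : ¬ r ∣ M.index) (hpow : ∀ x ∈ R, x ^ r ∈ K) :
    ∃ g : G, R ≤ MulAut.conj g • M := by
  have := Fact.mk hr
  let φ := MulAction.toPermHom G (G ⧸ M)
  have hP : IsPGroup r (R.map φ) := by
    rintro ⟨_, x, hx, rfl⟩
    refine ⟨1, Subtype.ext (Equiv.ext fun q => ?_)⟩
    have hker : x ^ r ∈ φ.ker := by
      rw [← normalCore_eq_ker]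
      exact normal_le_normalCore.2 hKM (hpow x hx)
    simp only [pow_one, coe_pow, ← map_pow, MonoidHom.mem_ker.1 hker, coe_one]
  obtain ⟨q, hq⟩ := hP.nonempty_fixed_point_of_prime_not_dvd_card (G ⧸ M) hindex
  obtain ⟨g, rfl⟩ := QuotientGroup.mk_surjective q
  refine ⟨g, fun x hx => ?_⟩
  have hfix : ((x * g : G) : G ⧸ M) = g := hq ⟨φ x, mem_map_of_mem φ hx⟩
  rw [mem_pointwise_smul_iff_inv_smul_mem, ← map_inv, MulAut.smul_def, MulAut.conj_apply, inv_inv,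
    mul_assoc]
  exact QuotientGroup.eq.1 hfix.symm

/-- A smallest normal subgroup `L` above `centralizer N` acts on `N` as an `r`-group with `r`
coprime to `|N|`; so `M₂ ⊓ L`, an `r`-group modulo the common core, fixes a point of `G ⧸ M₁`. -/
theorem exists_conj_smul_eq_of_normalCore_eq [Finite G] [Group.IsSolvable G]
    (hN : IsMinimalNormal G N) (h₁ : IsCompl M₁ N) (h₂ : IsCompl M₂ N)
    (hcore : M₁.normalCore = M₂.normalCore) : ∃ g : G, MulAut.conj g • M₁ = M₂ := by
  have := hN.isMulCommutative
  obtain hC | hC := eq_or_ne (centralizer (N : Set G)) ⊤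
  · rw [normalCore_eq_inf_centralizer h₁, normalCore_eq_inf_centralizer h₂, hC, inf_top_eq,
      inf_top_eq] at hcore
    exact ⟨1, by rw [map_one, one_smul, hcore]⟩
  obtain ⟨L, hL, hCL, r, hr, hpow⟩ := exists_normal_gt_forall_pow_mem hC
  have hindex : ¬ r ∣ M₁.index := by
    rw [(isComplement'_of_isCompl h₁).symm.index_eq_card]
    refine fun hdvd => hCL.not_ge (hN.le_centralizer_of_pow_mem hr hdvd hL fun x hx => ⟨1, ?_⟩)
    rw [pow_one]
    exact hpow x hx
  have hpow' : ∀ x ∈ M₂ ⊓ L, x ^ r ∈ M₁.normalCore := fun x hx => by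
    rw [hcore, normalCore_eq_inf_centralizer h₂]
    exact ⟨M₂.pow_mem hx.1 r, hpow x hx.2⟩
  obtain ⟨g, hg⟩ := exists_le_conj_smul_of_pow_mem M₁.normalCore_le hr hindex hpow'
  exact ⟨g, (eq_of_inf_le_of_not_le_centralizer hN h₂ (isCompl_conj_smul h₁ g)
    ((le_centralizer N).trans hCL.le) hCL.not_ge hg).symm⟩

end Complements

section ComplementTuples

open Subgroup Pointwise

variable {N M M₁ M₂ : Subgroup G} [N.Normal] {k : ℕ} {f : Fin k → G}

theorem conjugatesOfSet_conj_smul (g : G) (M : Subgroup G) :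
    Group.conjugatesOfSet ((MulAut.conj g • M : Subgroup G) : Set G) =
      Group.conjugatesOfSet (M : Set G) := by
  ext x
  simp only [mem_conjugatesOfSet_iff, mem_pointwise_smul_iff_inv_smul_mem, ← map_inv,
    MulAut.smul_def, MulAut.conj_apply, inv_inv]
  constructor
  · rintro ⟨y, hy⟩
    exact ⟨g⁻¹ * y, by simpa only [mul_inv_rev, inv_inv, mul_assoc] using hy⟩
  · rintro ⟨y, hy⟩
    exact ⟨g * y, by simpa only [mul_inv_rev, mul_assoc, inv_mul_cancel_left, inv_mul_cancel,
      mul_one] using hy⟩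

theorem sup_eq_top_of_invGen_quotient (hf : InvGen (G ⧸ N) (fun i => (f i : G ⧸ N)))
    (hM : ∀ i, f i ∈ Group.conjugatesOfSet (M : Set G)) : M ⊔ N = ⊤ := by
  by_contra hne
  refine not_invGen_iff.2 ⟨M.map (QuotientGroup.mk' N), fun htop => hne ?_, fun i => ?_⟩ hf
  · rw [← QuotientGroup.ker_mk' N, ← comap_map_eq, htop, comap_top]
  · obtain ⟨x, hx⟩ := mem_conjugatesOfSet_iff.1 (hM i)
    exact mem_conjugatesOfSet_iff.2 ⟨x, mem_map_of_mem (QuotientGroup.mk' N) hx⟩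

theorem exists_isCompl_of_mem_invGenOnlyModulo [IsMulCommutative N] (hN : IsMinimalNormal G N)
    (hf : f ∈ invGenOnlyModulo N k) :
    ∃ M, IsCompl M N ∧ ∀ i, f i ∈ Group.conjugatesOfSet (M : Set G) := by
  obtain ⟨M, hM, hmem⟩ := not_invGen_iff.1 hf.2
  exact ⟨M, hN.isCompl_of_sup_eq_top hM (sup_eq_top_of_invGen_quotient hf.1 hmem), hmem⟩

theorem mem_conjugatesOfSet_inf {x : G} (h₁ : x ∈ Group.conjugatesOfSet (M₁ : Set G))
    (h₂ : x ∈ Group.conjugatesOfSet (M₂ : Set G)) (h : M₂ ⊔ M₁.normalCore = ⊤) :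
    x ∈ Group.conjugatesOfSet ((M₁ ⊓ M₂ : Subgroup G) : Set G) := by
  rw [mem_conjugatesOfSet_iff] at *
  obtain ⟨y, hy⟩ := h₁
  obtain ⟨z, hz⟩ := h₂
  obtain ⟨m, hm, c, hc, hmc⟩ := exists_mul_eq_of_sup_eq_top h (z * y⁻¹)
  have hcore : c ∈ M₁ := M₁.normalCore_le hc
  have hconj : m⁻¹ * z = c * y := by rw [← inv_mul_cancel_left m c, hmc]; group
  refine ⟨m⁻¹ * z, mem_inf.2 ⟨?_, ?_⟩⟩
  · rw [hconj]
    simpa only [mul_inv_rev, mul_assoc] using M₁.mul_mem (M₁.mul_mem hcore hy) (M₁.inv_mem hcore)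
  · simpa only [mul_inv_rev, inv_inv, mul_assoc] using
      M₂.mul_mem (M₂.mul_mem (M₂.inv_mem hm) hz) hm

theorem normalCore_le_of_invGen_quotient [IsMulCommutative N] (hN : IsMinimalNormal G N)
    (hf : InvGen (G ⧸ N) (fun i => (f i : G ⧸ N))) (h₁ : IsCompl M₁ N) (h₂ : IsCompl M₂ N)
    (hM₁ : ∀ i, f i ∈ Group.conjugatesOfSet (M₁ : Set G))
    (hM₂ : ∀ i, f i ∈ Group.conjugatesOfSet (M₂ : Set G)) : M₁.normalCore ≤ M₂ := by
  by_contra hle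
  have hsup : M₂ ⊔ M₁.normalCore = ⊤ :=
    (hN.isCoatom_of_isCompl h₂).2 _ (left_lt_sup.2 hle)
  have hinf : M₁ ⊓ M₂ = M₁ := eq_of_le_of_sup_eq_top_of_disjoint inf_le_left
    (sup_eq_top_of_invGen_quotient hf fun i => mem_conjugatesOfSet_inf (hM₁ i) (hM₂ i) hsup)
    h₁.disjoint
  exact hle (M₁.normalCore_le.trans (inf_eq_left.1 hinf))

theorem normalCore_eq_of_invGen_quotient [IsMulCommutative N] (hN : IsMinimalNormal G N)
    (hf : InvGen (G ⧸ N) (fun i => (f i : G ⧸ N))) (h₁ : IsCompl M₁ N) (h₂ : IsCompl M₂ N)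
    (hM₁ : ∀ i, f i ∈ Group.conjugatesOfSet (M₁ : Set G))
    (hM₂ : ∀ i, f i ∈ Group.conjugatesOfSet (M₂ : Set G)) : M₁.normalCore = M₂.normalCore :=
  le_antisymm
    (normal_le_normalCore.2 (normalCore_le_of_invGen_quotient hN hf h₁ h₂ hM₁ hM₂))
    (normal_le_normalCore.2 (normalCore_le_of_invGen_quotient hN hf h₂ h₁ hM₂ hM₁))

theorem normalCore_le_of_coprime [IsMulCommutative N] (hN : IsMinimalNormal G N)
    (hcop : (Nat.card N).Coprime N.index) (h₁ : IsCompl M₁ N) (h₂ : IsCompl M₂ N) :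
    M₁.normalCore ≤ M₂ := by
  by_contra hle
  have hsup : M₂ ⊔ M₁.normalCore = ⊤ :=
    (hN.isCoatom_of_isCompl h₂).2 _ (left_lt_sup.2 hle)
  have hdvd : M₁.normalCore.index ∣ N.index := by
    rw [(isComplement'_of_isCompl h₂).index_eq_card, ← relIndex_top_right, ← hsup,
      relIndex_sup_right]
    exact relIndex_dvd_card _ _
  have hdvd' : Nat.card N ∣ M₁.normalCore.index := by
    rw [← (isComplement'_of_isCompl h₁).symm.index_eq_card]
    exact index_dvd_of_le M₁.normalCore_le
  exact hN.2.1 (card_eq_one.1 (Nat.Coprime.eq_one_of_dvd hcop (hdvd'.trans hdvd)))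

theorem normalCore_eq_of_coprime [IsMulCommutative N] (hN : IsMinimalNormal G N)
    (hcop : (Nat.card N).Coprime N.index) (h₁ : IsCompl M₁ N) (h₂ : IsCompl M₂ N) :
    M₁.normalCore = M₂.normalCore :=
  le_antisymm
    (normal_le_normalCore.2 (normalCore_le_of_coprime hN hcop h₁ h₂))
    (normal_le_normalCore.2 (normalCore_le_of_coprime hN hcop h₂ h₁))

theorem conjugatesOfSet_eq_of_normalCore_eq [Finite G] [Group.IsSolvable G]
    (hN : IsMinimalNormal G N) (h₁ : IsCompl M₁ N) (h₂ : IsCompl M₂ N)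
    (hcore : M₁.normalCore = M₂.normalCore) :
    Group.conjugatesOfSet (M₁ : Set G) = Group.conjugatesOfSet (M₂ : Set G) := by
  obtain ⟨g, rfl⟩ := exists_conj_smul_eq_of_normalCore_eq hN h₁ h₂ hcore
  rw [conjugatesOfSet_conj_smul]

theorem proportion_coe_subgroup [Finite G] (H : Subgroup G) :
    proportion (H : Set G) = 1 / H.index := by
  have := H.index_ne_zero_of_finite
  rw [proportion, div_eq_div_iff (mod_cast Nat.card_pos.ne') (mod_cast this), one_mul,
    ← H.card_mul_index, Nat.cast_mul]
  rfl

theorem index_normalCore_eq_mul [IsMulCommutative N] (h : IsCompl M N) :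
    M.normalCore.index = Nat.card N * (centralizer (N : Set G)).index := by
  have hsup : N ⊔ M.normalCore = centralizer (N : Set G) := by
    rw [sup_comm, normalCore_eq_inf_centralizer h,
      inf_sup_eq_of_isCompl_of_le h (le_centralizer N)]
  have hdisj : M.normalCore ⊓ N = ⊥ := (h.disjoint.mono_left M.normalCore_le).eq_bot
  have hrel : M.normalCore.relIndex (centralizer (N : Set G)) = Nat.card N := by
    rw [← hsup, relIndex_sup_right, ← inf_relIndex_right, hdisj, relIndex_bot_left]
  rw [← hrel, relIndex_mul_index (hsup ▸ le_sup_right)]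

/-- An element of `centralizer N` with a conjugate in `M` lies in the normal core of `M`. -/
theorem proportion_conjugatesOfSet_isCompl_le [Finite G] [IsMulCommutative N] (h : IsCompl M N) :
    proportion (Group.conjugatesOfSet (M : Set G)) ≤
      1 - (1 - 1 / Nat.card N) / (centralizer (N : Set G)).index := by
  have hsub : Group.conjugatesOfSet (M : Set G) ⊆
      (M.normalCore : Set G) ∪ (centralizer (N : Set G) : Set G)ᶜ := by
    refine fun g hg => or_iff_not_imp_right.2 fun hgC => ?_
    obtain ⟨x, hx⟩ := mem_conjugatesOfSet_iff.1 hg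
    have hxC := (normal_centralizer (H := N)).conj_mem g (not_not.1 hgC) x
    have hcore : x * g * x⁻¹ ∈ M.normalCore := normalCore_eq_inf_centralizer h ▸ ⟨hx, hxC⟩
    simpa only [mul_assoc, inv_mul_cancel_left, inv_inv, inv_mul_cancel, mul_one,
      SetLike.mem_coe] using
      M.normalCore_normal.conj_mem _ hcore x⁻¹
  calc proportion (Group.conjugatesOfSet (M : Set G))
      ≤ 1 / M.normalCore.index + (1 - 1 / (centralizer (N : Set G)).index) := by
        rw [← proportion_coe_subgroup, ← proportion_coe_subgroup, ← proportion_compl]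
        exact (proportion_mono hsub).trans (proportion_union_le _ _)
    _ = 1 - (1 - 1 / Nat.card N) / (centralizer (N : Set G)).index := by
        have := (centralizer (N : Set G)).index_ne_zero_of_finite
        have := (Nat.card_pos (α := N)).ne'
        rw [index_normalCore_eq_mul h]
        push_cast
        field_simp
        ring

end ComplementTuples

section Recursion

variable {N : Subgroup G}

/-- Summing the recursion gives `∑ w ≤ 1 + u ∑ w`, as the increments of `a` telescope. -/
theorem tsum_le_of_recursion {w a : ℕ → ℝ} {u : ℝ} (hw : Summable w) (ha : ∀ k, 0 ≤ a k)
    (hu : u < 1) (hzero : w 0 + a 0 ≤ 1) (hsucc : ∀ k, w (k + 1) ≤ u * w k + (a k - a (k + 1))) :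
    ∑' k, w k ≤ 1 / (1 - u) := by
  have hpartial (n : ℕ) :
      ∑ k ∈ Finset.range (n + 1), w k + a n ≤ 1 + u * ∑ k ∈ Finset.range n, w k := by
    induction n with
    | zero => simpa using hzero
    | succ n ih =>
      rw [Finset.sum_range_succ] at ih
      rw [Finset.sum_range_succ, Finset.sum_range_succ w n, mul_add]
      linarith [hsucc n]
  have hlim := hw.hasSum.tendsto_sum_nat
  have hle : ∑' k, w k ≤ 1 + u * ∑' k, w k :=
    le_of_tendsto_of_tendsto' ((Filter.tendsto_add_atTop_iff_nat 1).2 hlim)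
      ((hlim.const_mul u).const_add 1) fun n => by linarith [hpartial n, ha n]
  rw [le_div_iff₀ (sub_pos.2 hu)]
  linarith

/-- A tuple outside `nonInvGen (G ⧸ N) (k + 1)` whose tail lies in `nonInvGen (G ⧸ N) k`
contributes the difference of the two proportions. Any other tuple has a tail in
`invGenOnlyModulo N k`, and this tail determines the conjugates of a complement in which the head
has to lie. -/
theorem proportion_invGenOnlyModulo_succ_le [Finite G] [Group.IsSolvable G] [N.Normal]
    (hN : IsMinimalNormal G N) {u : ℝ}
    (hu : ∀ M, IsCompl M N → proportion (Group.conjugatesOfSet (M : Set G)) ≤ u) (k : ℕ) :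
    proportion (invGenOnlyModulo N (k + 1)) ≤ u * proportion (invGenOnlyModulo N k) +
      (proportion (nonInvGen (G ⧸ N) k) - proportion (nonInvGen (G ⧸ N) (k + 1))) := by
  have := hN.isMulCommutative
  let S : Set (Fin (k + 1) → G) :=
    {f | f ∈ invGenOnlyModulo N (k + 1) ∧ Fin.tail f ∈ invGenOnlyModulo N k}
  let R : Set (Fin (k + 1) → G ⧸ N) := {f | InvGen (G ⧸ N) f ∧ ¬ InvGen (G ⧸ N) (Fin.tail f)}
  have hS : proportion S ≤ u * proportion (invGenOnlyModulo N k) := by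
    refine proportion_le_mul_of_tail (fun f hf => hf.2) fun t ht => ?_
    obtain ⟨M, hM, hmem⟩ := exists_isCompl_of_mem_invGenOnlyModulo hN ht
    refine (proportion_mono fun a ha => ?_).trans (hu M hM)
    obtain ⟨M', hM', hmem'⟩ := exists_isCompl_of_mem_invGenOnlyModulo hN ha.1
    have hcore := normalCore_eq_of_invGen_quotient hN ht.1 hM hM' hmem fun i => hmem' i.succ
    rw [conjugatesOfSet_eq_of_normalCore_eq hN hM hM' hcore]
    exact hmem' 0
  calc proportion (invGenOnlyModulo N (k + 1))
      ≤ proportion (S ∪ {f | (fun i => (f i : G ⧸ N)) ∈ R}) := by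
        refine proportion_mono fun f hf => or_iff_not_imp_right.2 fun hR => ⟨hf, ?_, ?_⟩
        · exact not_not.1 fun htail => hR ⟨hf.1, htail⟩
        · exact fun htail => hf.2 htail.of_tail
    _ ≤ proportion S + proportion R := by
        rw [← proportion_preimage_quotientMk N R]
        exact proportion_union_le _ _
    _ ≤ _ := add_le_add hS proportion_invGen_and_not_tail.le

theorem tsum_invGenOnlyModulo_le [Finite G] [Group.IsSolvable G] [N.Normal]
    (hN : IsMinimalNormal G N) {u : ℝ} (hu1 : u < 1)
    (hu : ∀ M, IsCompl M N → proportion (Group.conjugatesOfSet (M : Set G)) ≤ u) :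
    ∑' k, proportion (invGenOnlyModulo N k) ≤ 1 / (1 - u) :=
  tsum_le_of_recursion (summable_proportion_invGenOnlyModulo N) (fun _ => proportion_nonneg _) hu1
    (by rw [add_comm, ← proportion_nonInvGen_eq_add]; exact proportion_le_one _)
    (proportion_invGenOnlyModulo_succ_le hN hu)

theorem proportion_conjugatesOfSet_le_of_isCompl [Finite G] [IsMulCommutative N] [N.Normal]
    {M : Subgroup G} (hN : IsMinimalNormal G N) (hM : IsCompl M N) :
    proportion (Group.conjugatesOfSet (M : Set G)) ≤ 1 - 1 / Nat.card N := by
  rw [← (isComplement'_of_isCompl hM).symm.index_eq_card]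
  exact proportion_conjugatesOfSet_le (hN.isCoatom_of_isCompl hM).1

theorem cheb_le_add_card [Finite G] [Group.IsSolvable G] [N.Normal] (hN : IsMinimalNormal G N) :
    cheb G ≤ cheb (G ⧸ N) + Nat.card N := by
  have := hN.isMulCommutative
  have hpos : (0 : ℝ) < Nat.card N := mod_cast Nat.card_pos
  rw [cheb_eq_add_tsum N]
  gcongr
  refine (tsum_invGenOnlyModulo_le hN (u := 1 - 1 / Nat.card N)
    (sub_lt_self 1 (by positivity)) fun M hM =>
      proportion_conjugatesOfSet_le_of_isCompl hN hM).trans_eq (by field_simp; ring)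

theorem cheb_le_add_index_centralizer_mul [Finite G] [Group.IsSolvable G] [N.Normal]
    (hN : IsMinimalNormal G N) :
    cheb G ≤ cheb (G ⧸ N) +
      (Subgroup.centralizer (N : Set G)).index * (Nat.card N / (Nat.card N - 1)) := by
  have := hN.isMulCommutative
  have hcard : (1 : ℝ) < Nat.card N := mod_cast N.one_lt_card_iff_ne_bot.2 hN.2.1
  have hindex : 0 < (Subgroup.centralizer (N : Set G)).index :=
    Nat.pos_of_ne_zero (Subgroup.index_ne_zero_of_finite)
  have hpos : 0 < 1 - 1 / (Nat.card N : ℝ) := sub_pos.2 ((div_lt_one (by linarith)).2 hcard)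
  rw [cheb_eq_add_tsum N]
  gcongr
  refine (tsum_invGenOnlyModulo_le hN (sub_lt_self 1 (by positivity)) fun M hM =>
    proportion_conjugatesOfSet_isCompl_le hM).trans_eq ?_
  have : (Nat.card N : ℝ) - 1 ≠ 0 := by linarith
  rw [sub_sub_cancel]
  field_simp

theorem invGenOnlyModulo_zero [N.Normal] (hne : N ≠ ⊤) : invGenOnlyModulo N 0 = ∅ := by
  refine Set.eq_empty_of_forall_notMem fun f hf => hne ?_
  rw [← bot_sup_eq N]
  exact sup_eq_top_of_invGen_quotient hf.1 fun i => i.elim0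

theorem tsum_invGenOnlyModulo_le_of_forall_mem [Finite G] [N.Normal] (hne : N ≠ ⊤) {W : Set G}
    {u : ℝ} (hW : proportion W ≤ u) (hu1 : u < 1)
    (hmem : ∀ k, ∀ f ∈ invGenOnlyModulo N k, ∀ i, f i ∈ W) :
    ∑' k, proportion (invGenOnlyModulo N k) ≤ 1 / (1 - u) - 1 := by
  have hu0 : 0 ≤ u := (proportion_nonneg W).trans hW
  have hle (k : ℕ) : proportion (invGenOnlyModulo N k) ≤ u ^ k :=
    (proportion_mono (hmem k)).trans ((proportion_pi_le_pow W k).trans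
      (pow_le_pow_left₀ (proportion_nonneg W) hW k))
  have hsummable := summable_proportion_invGenOnlyModulo N
  have hgeom := summable_geometric_of_lt_one hu0 hu1
  calc ∑' k, proportion (invGenOnlyModulo N k)
      = ∑' k, proportion (invGenOnlyModulo N (k + 1)) := by
        rw [hsummable.tsum_eq_zero_add, invGenOnlyModulo_zero hne, proportion, Set.ncard_empty,
          Nat.cast_zero, zero_div, zero_add]
    _ ≤ ∑' k, u ^ (k + 1) := ((summable_nat_add_iff 1).2 hsummable).tsum_le_tsum
        (fun k => hle (k + 1)) ((summable_nat_add_iff 1).2 hgeom)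
    _ = 1 / (1 - u) - 1 := by
        rw [one_div, ← tsum_geometric_of_lt_one hu0 hu1, hgeom.tsum_eq_zero_add, pow_zero,
          add_sub_cancel_left]

/-- All complements of `N` have the same normal core, hence the same conjugates. -/
theorem cheb_le_add_card_sub_one_of_coprime [Finite G] [Group.IsSolvable G] [N.Normal]
    (hN : IsMinimalNormal G N) (hcop : (Nat.card N).Coprime N.index) (hne : N ≠ ⊤) :
    cheb G ≤ cheb (G ⧸ N) + (Nat.card N - 1) := by
  have := hN.isMulCommutative
  obtain ⟨M, hM⟩ := Subgroup.exists_left_complement'_of_coprime hcop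
  have hmem (k : ℕ) (f) (hf : f ∈ invGenOnlyModulo N k) :
      ∀ i, f i ∈ Group.conjugatesOfSet (M : Set G) := by
    obtain ⟨M', hM', hmem⟩ := exists_isCompl_of_mem_invGenOnlyModulo hN hf
    rwa [conjugatesOfSet_eq_of_normalCore_eq hN hM' hM.isCompl
      (normalCore_eq_of_coprime hN hcop hM' hM.isCompl)] at hmem
  have hpos : (0 : ℝ) < Nat.card N := mod_cast Nat.card_pos
  rw [cheb_eq_add_tsum N]
  gcongr
  refine (tsum_invGenOnlyModulo_le_of_forall_mem hne
    (proportion_conjugatesOfSet_le_of_isCompl hN hM.isCompl)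
    (sub_lt_self 1 (by positivity)) hmem).trans_eq (by field_simp; ring)

theorem cheb_eq_cheb_quotient [Finite G] [IsMulCommutative N] [N.Normal]
    (hN : IsMinimalNormal G N) (h : ∀ M, ¬ IsCompl M N) : cheb G = cheb (G ⧸ N) := by
  have hempty (k : ℕ) : invGenOnlyModulo N k = ∅ := Set.eq_empty_of_forall_notMem fun f hf =>
    have ⟨M, hM, _⟩ := exists_isCompl_of_mem_invGenOnlyModulo hN hf
    h M hM
  simp [cheb_eq_add_tsum N, hempty, proportion]

end Recursion

section ElementaryAbelian

theorem span_range_eq_top_iff_linearIndependent_repr {K V ι κ : Type*} [Field K] [AddCommGroup V]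
    [Module K V] [Finite ι] [Finite κ] (b : Module.Basis ι K V) (f : κ → V) :
    Submodule.span K (Set.range f) = ⊤ ↔
      LinearIndependent K fun (i : ι) (j : κ) => b.repr (f j) i := by
  have := Fintype.ofFinite ι
  have := Fintype.ofFinite κ
  have := Module.Finite.of_basis b
  let A : Matrix κ ι K := Matrix.of fun j => b.equivFun (f j)
  have hspan : Submodule.span K (Set.range A) =
      (Submodule.span K (Set.range f)).map b.equivFun.toLinearMap := by
    rw [Submodule.map_span, ← Set.range_comp]
    rfl
  have hrank : Set.finrank K (Set.range A.transpose) =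
      Module.finrank K (Submodule.span K (Set.range f)) := by
    rw [← LinearEquiv.finrank_map_eq b.equivFun, ← hspan]
    exact A.transpose.rank_eq_finrank_span_row.symm.trans
      (A.rank_transpose.trans A.rank_eq_finrank_span_row)
  refine Iff.trans ?_ (linearIndependent_iff_card_eq_finrank_span (b := A.transpose)).symm
  rw [hrank, ← Module.finrank_eq_card_basis b]
  exact ⟨fun h => by rw [h, finrank_top], fun h => Submodule.eq_top_of_finrank_eq h.symm⟩

theorem card_linearIndependent_eq_prod (K : Type*) [Field K] [Finite K] (s k : ℕ) :
    (Nat.card {g : Fin s → Fin k → K // LinearIndependent K g} : ℝ) =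
      ∏ i ∈ Finset.range s, ((Nat.card K : ℝ) ^ k - (Nat.card K : ℝ) ^ i) := by
  have := Fintype.ofFinite K
  by_cases hsk : s ≤ k
  · rw [card_linearIndependent (by rwa [Module.finrank_fin_fun]), Module.finrank_fin_fun,
      Finset.prod_range, Nat.cast_prod]
    refine Finset.prod_congr rfl fun i _ => ?_
    rw [Nat.cast_sub (Nat.pow_le_pow_right Fintype.card_pos (i.2.le.trans hsk)), Nat.cast_pow,
      Nat.cast_pow, Nat.card_eq_fintype_card]
  · rw [Finset.prod_eq_zero (Finset.mem_range.2 (not_le.1 hsk)) (sub_self _), Nat.cast_eq_zero,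
      Nat.card_eq_zero]
    refine Or.inl ⟨fun g => hsk ?_⟩
    simpa only [Module.finrank_fin_fun, Fintype.card_fin] using g.2.fintype_card_le_finrank

theorem card_span_range_eq_top (K V : Type*) [Field K] [Finite K] [AddCommGroup V] [Module K V]
    [Module.Finite K V] (k : ℕ) :
    (Nat.card {f : Fin k → V // Submodule.span K (Set.range f) = ⊤} : ℝ) =
      ∏ i ∈ Finset.range (Module.finrank K V), ((Nat.card K : ℝ) ^ k - (Nat.card K : ℝ) ^ i) := by
  let b := Module.finBasis K V
  let e : (Fin k → V) ≃ (Fin (Module.finrank K V) → Fin k → K) :=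
    (Equiv.arrowCongr (Equiv.refl _) b.equivFun.toEquiv).trans (Equiv.piComm _)
  rw [← card_linearIndependent_eq_prod]
  exact congrArg _ (Nat.card_congr
    (e.subtypeEquiv fun f => span_range_eq_top_iff_linearIndependent_repr b f))

theorem span_zmod_eq_top_iff_closure_eq_top (n : ℕ) {G : Type*} [CommGroup G]
    [Module (ZMod n) (Additive G)] (S : Set G) :
    Submodule.span (ZMod n) (Additive.toMul ⁻¹' S) = ⊤ ↔ Subgroup.closure S = ⊤ := by
  let e : Subgroup G ≃o Submodule (ZMod n) (Additive G) :=
    Subgroup.toAddSubgroup.trans (AddSubgroup.toZModSubmodule n)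
  have hspan : Submodule.span (ZMod n) (Additive.toMul ⁻¹' S) = e (Subgroup.closure S) :=
    le_antisymm (Submodule.span_le.2 (Subgroup.subset_closure (G := G)))
      (e.le_symm_apply.1 ((Subgroup.closure_le _).2
        (Submodule.subset_span (R := ZMod n) (M := Additive G))))
  rw [hspan, map_eq_top_iff]

theorem probInvGen_eq_prod {G : Type*} [CommGroup G] [Finite G] (p : ℕ) [Fact p.Prime]
    [Module (ZMod p) (Additive G)] (k : ℕ) :
    probInvGen G k = ∏ i ∈ Finset.range (Module.finrank (ZMod p) (Additive G)),
      (1 - p ^ i * (1 / p : ℝ) ^ k) := by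
  have : Finite (Additive G) := ‹Finite G›
  have hcard : Nat.card G = p ^ Module.finrank (ZMod p) (Additive G) := by
    have h := Module.natCard_eq_pow_finrank (K := ZMod p) (V := Additive G)
    rwa [Nat.card_zmod] at h
  have hcongr : Nat.card {f : Fin k → G // InvGen G f} =
      Nat.card {f : Fin k → Additive G // Submodule.span (ZMod p) (Set.range f) = ⊤} :=
    Nat.card_congr <| Equiv.subtypeEquiv (Equiv.refl _) fun f =>
      invGen_iff_closure_eq_top.trans (span_zmod_eq_top_iff_closure_eq_top p (Set.range f)).symm
  have hp : (p : ℝ) ≠ 0 := Nat.cast_ne_zero.2 (Fact.out (p := p.Prime)).ne_zero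
  rw [probInvGen, hcongr, card_span_range_eq_top, Nat.card_zmod, hcard, Nat.cast_pow,
    pow_right_comm, ← Finset.card_range (Module.finrank _ _), ← Finset.prod_const,
    Finset.card_range, ← Finset.prod_div_distrib]
  refine Finset.prod_congr rfl fun i _ => ?_
  rw [one_div, inv_pow]
  field_simp

theorem probInvGen_eq_prod_of_sq_eq_one [Finite G] (hsq : ∀ x : G, x ^ 2 = 1) {s : ℕ}
    (hcard : Nat.card G = 2 ^ s) (k : ℕ) :
    probInvGen G k = ∏ i ∈ Finset.range s, (1 - 2 ^ i * (1 / 2 : ℝ) ^ k) := by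
  let _ : CommGroup G :=
    { ‹Group G› with
      mul_comm := Commute.of_orderOf_dvd_two fun x => orderOf_dvd_of_pow_eq_one (hsq x) }
  let _ : Module (ZMod 2) (Additive G) := AddCommGroup.zmodModule fun x => hsq x.toMul
  have hrank : Module.finrank (ZMod 2) (Additive G) = s := by
    have h := Module.natCard_eq_pow_finrank (K := ZMod 2) (V := Additive G)
    rw [Nat.card_zmod] at h
    exact Nat.pow_right_injective le_rfl (h.symm.trans hcard)
  rw [probInvGen_eq_prod 2, hrank, Nat.cast_ofNat]

theorem cheb_of_isKleinFour [IsKleinFour G] : cheb G = 10 / 3 := by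
  have := IsKleinFour.instFinite (G := G)
  have hsum := ((hasSum_geometric_of_lt_one (r := (1 / 2 : ℝ)) (by norm_num)
    (by norm_num)).mul_left 3).sub ((hasSum_geometric_of_lt_one (r := (1 / 4 : ℝ)) (by norm_num)
    (by norm_num)).mul_left 2)
  have hprob (k : ℕ) : 1 - probInvGen G k = 3 * (1 / 2) ^ k - 2 * (1 / 4) ^ k := by
    have hfour : (1 / 4 : ℝ) ^ k = ((1 / 2) ^ k) ^ 2 := by rw [pow_right_comm]; norm_num
    rw [probInvGen_eq_prod_of_sq_eq_one (s := 2) (fun x => by rw [sq, IsKleinFour.mul_self])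
      IsKleinFour.card_four, hfour, Finset.prod_range_succ, Finset.prod_range_one]
    ring
  rw [cheb, tsum_congr hprob, hsum.tsum_eq]
  norm_num

theorem cheb_of_card_eq_eight [Finite G] (hsq : ∀ x : G, x ^ 2 = 1) (hcard : Nat.card G = 8) :
    cheb G = 94 / 21 := by
  have hsum := (((hasSum_geometric_of_lt_one (r := (1 / 2 : ℝ)) (by norm_num)
    (by norm_num)).mul_left 7).sub ((hasSum_geometric_of_lt_one (r := (1 / 4 : ℝ)) (by norm_num)
    (by norm_num)).mul_left 14)).add ((hasSum_geometric_of_lt_one (r := (1 / 8 : ℝ)) (by norm_num)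
    (by norm_num)).mul_left 8)
  have hprob (k : ℕ) :
      1 - probInvGen G k = 7 * (1 / 2) ^ k - 14 * (1 / 4) ^ k + 8 * (1 / 8) ^ k := by
    have hfour : (1 / 4 : ℝ) ^ k = ((1 / 2) ^ k) ^ 2 := by rw [pow_right_comm]; norm_num
    have height : (1 / 8 : ℝ) ^ k = ((1 / 2) ^ k) ^ 3 := by rw [pow_right_comm]; norm_num
    rw [probInvGen_eq_prod_of_sq_eq_one (s := 3) hsq hcard, hfour, height,
      Finset.prod_range_succ, Finset.prod_range_succ, Finset.prod_range_one]
    ring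
  rw [cheb, tsum_congr hprob, hsum.tsum_eq]
  norm_num

end ElementaryAbelian

section CentralizerIndex

open Subgroup

variable {N : Subgroup G}

theorem index_centralizer_dvd_index [IsMulCommutative N] :
    (centralizer (N : Set G)).index ∣ N.index :=
  index_dvd_of_le (le_centralizer N)

theorem index_centralizer_dvd_card_mulAut [N.Normal] :
    (centralizer (N : Set G)).index ∣ Nat.card (MulAut N) := by
  have hker : (MulAut.conjNormal : G →* MulAut N).ker = centralizer (N : Set G) := by
    ext g
    simp only [MonoidHom.mem_ker, mem_centralizer_iff, MulEquiv.ext_iff, Subtype.ext_iff,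
      MulAut.conjNormal_apply, MulAut.one_apply, mul_inv_eq_iff_eq_mul, Subtype.forall,
      SetLike.mem_coe, eq_comm (b := g * _)]
  rw [← hker, index_ker]
  exact card_subgroup_dvd_card _

theorem index_centralizer_dvd_card_sub_one [N.Normal] (hN : (Nat.card N).Prime) :
    (centralizer (N : Set G)).index ∣ Nat.card N - 1 := by
  have := Fact.mk hN
  have := Nat.finite_of_card_ne_zero hN.ne_zero
  have : IsCyclic N := isCyclic_of_prime_card rfl
  rw [← Nat.totient_prime hN, ← IsCyclic.card_mulAut]
  exact index_centralizer_dvd_card_mulAut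

theorem normal_of_le_center {M : Subgroup G} (hM : M ≤ center G) : M.Normal :=
  ⟨fun x hx g => by rwa [mem_center_iff.1 (hM hx) g, mul_inv_cancel_right]⟩

theorem IsMinimalNormal.card_prime_of_le_center [Finite G] (hN : IsMinimalNormal G N)
    (hle : N ≤ center G) : (Nat.card N).Prime := by
  obtain ⟨p, hp, hdvd⟩ := Nat.exists_prime_and_dvd fun h => hN.2.1 (card_eq_one.1 h)
  have := Fact.mk hp
  obtain ⟨x, hx⟩ := exists_prime_orderOf_dvd_card' p hdvd
  have hx1 : (x : G) ≠ 1 := fun h => hp.one_lt.ne' (by rw [← hx, ← orderOf_coe, h, orderOf_one])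
  have hcenter : zpowers (x : G) ≤ center G := zpowers_le.2 (hle x.2)
  have hzpowers : N = zpowers (x : G) := le_antisymm
    (hN.le_of_mem (normal_of_le_center hcenter) hx1 x.2 (mem_zpowers _)) (zpowers_le.2 x.2)
  rwa [hzpowers, Nat.card_zpowers, orderOf_coe, hx]

theorem IsMinimalNormal.card_prime_of_index_centralizer_eq_pow [Finite G]
    (hN : IsMinimalNormal G N) {p : ℕ} (hp : p.Prime) (hdvd : p ∣ Nat.card N) {s : ℕ}
    (hindex : (centralizer (N : Set G)).index = p ^ s) : (Nat.card N).Prime := by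
  have := hN.1
  have hle : ⊤ ≤ centralizer (N : Set G) :=
    hN.le_centralizer_of_pow_mem hp hdvd inferInstance fun x _ =>
      ⟨s, hindex ▸ pow_index_mem _ x⟩
  exact hN.card_prime_of_le_center (centralizer_eq_top_iff_subset.1 (top_le_iff.1 hle))

theorem IsMinimalNormal.index_ne_pow_of_not_card_prime [Finite G] [IsMulCommutative N]
    (hN : IsMinimalNormal G N) {p : ℕ} (hp : p.Prime) (hdvd : p ∣ Nat.card N)
    (hcard : ¬ (Nat.card N).Prime) (s : ℕ) : N.index ≠ p ^ s := fun h => by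
  have hindex := index_centralizer_dvd_index (N := N)
  rw [h, Nat.dvd_prime_pow hp] at hindex
  obtain ⟨t, -, ht⟩ := hindex
  exact hcard (hN.card_prime_of_index_centralizer_eq_pow hp hdvd ht)

theorem eq_top_of_forall_isMinimalNormal_le [Finite G] {Z : Subgroup G} (hZ : Z ≤ center G)
    (h : ∀ N, IsMinimalNormal G N → N ≤ Z ∧ ∃ M, IsCompl M N) : Z = ⊤ := by
  obtain ⟨M, hM, hmin⟩ := (Set.toFinite {M : Subgroup G | M ⊔ Z = ⊤}).exists_minimal
    ⟨⊤, top_sup_eq Z⟩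
  have hsup : M ⊔ Z = ⊤ := hM
  have hnormal : M.Normal := normalizer_eq_top_iff.1 <| top_le_iff.1 <|
    hsup ▸ sup_le le_normalizer (hZ.trans (center_le_normalizer _))
  suffices hbot : M = ⊥ by rwa [hbot, bot_sup_eq] at hsup
  by_contra hne
  obtain ⟨N, hNM, hN⟩ := exists_isMinimalNormal_le hnormal hne
  obtain ⟨hNZ, X, hX⟩ := h N hN
  have := hN.1
  have hXM : X ⊓ M ⊔ Z = ⊤ := by
    rw [← sup_eq_right.2 hNZ, ← sup_assoc, inf_sup_eq_of_isCompl_of_le hX hNM, hsup]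
  have hle : M ≤ X := (hmin hXM inf_le_right).trans inf_le_left
  exact hN.2.1 (le_bot_iff.1 (hX.inf_eq_bot ▸ le_inf (hNM.trans hle) le_rfl))

theorem sq_eq_one_of_forall_isMinimalNormal [Finite G]
    (h : ∀ N : Subgroup G, IsMinimalNormal G N → Nat.card N = 2 ∧ ∃ M, IsCompl M N) (x : G) :
    x ^ 2 = 1 := by
  let Z : Subgroup G :=
    { carrier := {z | z ∈ center G ∧ z ^ 2 = 1}
      mul_mem' := fun {a b} ⟨ha, ha'⟩ ⟨hb, hb'⟩ => ⟨mul_mem ha hb, by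
        rw [Commute.mul_pow (mem_center_iff.1 hb a), ha', hb', one_mul]⟩
      one_mem' := ⟨one_mem _, one_pow 2⟩
      inv_mem' := fun {a} ⟨ha, ha'⟩ => ⟨inv_mem ha, by rw [inv_pow, ha', inv_one]⟩ }
  have hZ : Z = ⊤ := eq_top_of_forall_isMinimalNormal_le (fun z hz => hz.1) fun N hN => by
    obtain ⟨hcard, hcompl⟩ := h N hN
    have := hN.1
    have hindex : (centralizer (N : Set G)).index = 1 := by
      have hdvd := index_centralizer_dvd_card_sub_one (hcard ▸ Nat.prime_two)
      rwa [hcard, Nat.dvd_one] at hdvd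
    refine ⟨fun n hn => ⟨?_, ?_⟩, hcompl⟩
    · exact centralizer_eq_top_iff_subset.1 (index_eq_one.1 hindex) hn
    · exact hcard ▸ orderOf_dvd_iff_pow_eq_one.1 (N.orderOf_dvd_natCard hn)
  exact (hZ ▸ mem_top x : x ∈ Z).2

end CentralizerIndex

section SmallOrders

open Subgroup

theorem cheb_of_subsingleton [Subsingleton G] : cheb G = 0 := by
  have hprob (k : ℕ) : probInvGen G k = 1 := by
    have hall (f : Fin k → G) : InvGen G f := fun c => Subsingleton.elim _ _
    rw [probInvGen, Nat.card_congr (Equiv.subtypeUnivEquiv hall), Nat.card_fun, Nat.card_unique,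
      Nat.card_fin]
    norm_num
  simp only [cheb, hprob, sub_self, tsum_zero]

theorem cheb_le_of_card_prime (hG : (Nat.card G).Prime) :
    cheb G ≤ Nat.card G / (Nat.card G - 1) := by
  have := Fact.mk hG
  have := Nat.finite_of_card_ne_zero hG.ne_zero
  have hcyc : IsCyclic G := isCyclic_of_prime_card rfl
  let _ := hcyc.commGroup
  have := isSimpleGroup_of_prime_card (α := G) rfl
  have htop : IsMinimalNormal G (⊤ : Subgroup G) :=
    ⟨inferInstance, top_ne_bot, fun M hM hne _ => hM.eq_bot_or_eq_top.resolve_left hne⟩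
  have := QuotientGroup.subsingleton_quotient_top (G := G)
  have hindex : (centralizer ((⊤ : Subgroup G) : Set G)).index = 1 :=
    index_eq_one.2 (centralizer_eq_top_iff_subset.2 (CommGroup.center_eq_top (G := G) ▸ le_rfl))
  have h := cheb_le_add_index_centralizer_mul htop
  rwa [cheb_of_subsingleton (G := G ⧸ (⊤ : Subgroup G)), hindex, zero_add, Nat.cast_one,
    one_mul, card_top] at h

theorem not_isPrimePow_six : ¬ IsPrimePow 6 := fun h => by
  have hdvd := (Nat.Coprime.isPrimePow_dvd_mul (a := 2) (b := 3) (by norm_num) h).1 (by norm_num)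
  omega

theorem cheb_le_four_of_card_eq_six [Finite G] [Group.IsSolvable G] (hG : Nat.card G = 6) :
    cheb G ≤ 4 := by
  have : Nontrivial G := Finite.one_lt_card_iff_nontrivial.1 (by omega)
  obtain ⟨N, hN⟩ := exists_isMinimalNormal G
  have := hN.1
  have hcard : Nat.card N * N.index = 6 := hG ▸ N.card_mul_index
  have hne_one : Nat.card N ≠ 1 := fun h => hN.2.1 (card_eq_one.1 h)
  have hne_six : Nat.card N ≠ 6 := fun h => not_isPrimePow_six (h ▸ hN.isPrimePow_card)
  have hcases : Nat.card N = 2 ∧ N.index = 3 ∨ Nat.card N = 3 ∧ N.index = 2 := by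
    have hdvd : Nat.card N ∣ 6 := ⟨_, hcard.symm⟩
    have hle := Nat.le_of_dvd (by norm_num) hdvd
    interval_cases Nat.card N <;> omega
  have hcop : (Nat.card N).Coprime N.index := by
    obtain ⟨h, h'⟩ | ⟨h, h'⟩ := hcases <;> rw [h, h'] <;> norm_num
  have hprime : N.index.Prime := by
    obtain ⟨-, h⟩ | ⟨-, h⟩ := hcases <;> rw [h] <;> norm_num
  have hquot := cheb_le_of_card_prime (G := G ⧸ N) hprime
  have hle := cheb_le_add_card_sub_one_of_coprime hN hcop fun h => hprime.ne_one (index_eq_one.2 h)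
  have hindex : Nat.card (G ⧸ N) = N.index := rfl
  rw [hindex] at hquot
  obtain ⟨h, h'⟩ | ⟨h, h'⟩ := hcases <;> rw [h'] at hquot <;> rw [h] at hle <;>
    norm_num at hquot hle <;> linarith

end SmallOrders

section NumericalBounds

theorem lt_mul_sqrt_of_sq_lt {x c n : ℝ} (hc : 0 < c) (h : (x / c) ^ 2 < n) : x < c * √n := by
  rw [← div_lt_iff₀' hc]
  exact Real.lt_sqrt_of_sq_lt h

theorem sub_one_lt_sq_sqrt_sub_one {q : ℝ} (hq : 5 ≤ q) :
    q - 1 < (5 / 3 * (√q - 1)) ^ 2 := by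
  have hsq : √q ^ 2 = q := Real.sq_sqrt (by linarith)
  have hs : 2.236 ≤ √q := Real.le_sqrt_of_sq_le (by norm_num; linarith)
  nlinarith

theorem sq_div_two_mul_sub_one_lt {q : ℝ} (hq : 5 ≤ q) :
    q ^ 2 / (2 * (q - 1)) < (5 / 3 * (√q - 1)) ^ 2 := by
  have hsq : √q ^ 2 = q := Real.sq_sqrt (by linarith)
  have hs : 2.236 ≤ √q := Real.le_sqrt_of_sq_le (by norm_num; linarith)
  obtain ⟨t, ht, hst⟩ : ∃ t, 0 ≤ t ∧ √q = 2.236 + t := ⟨√q - 2.236, by linarith, by ring⟩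
  rw [hst] at hsq ⊢
  rw [div_lt_iff₀ (by linarith), ← sub_pos, ← hsq]
  ring_nf
  positivity

theorem sq_div_sub_one_lt {q : ℝ} (hq : 8 ≤ q) :
    q ^ 2 / (q - 1) < (5 / 3 * (√q - 1)) ^ 2 := by
  have hsq : √q ^ 2 = q := Real.sq_sqrt (by linarith)
  have hs : 2.828 ≤ √q := Real.le_sqrt_of_sq_le (by norm_num; linarith)
  obtain ⟨t, ht, hst⟩ : ∃ t, 0 ≤ t ∧ √q = 2.828 + t := ⟨√q - 2.828, by linarith, by ring⟩
  rw [hst] at hsq ⊢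
  rw [div_lt_iff₀ (by linarith), ← sub_pos, ← hsq]
  ring_nf
  positivity

theorem cheb_lt_of_card_eq {x : ℝ} {n : ℕ} (hG : Nat.card G = n) (hx : cheb G ≤ x)
    (hn : (x / (5 / 3)) ^ 2 < n) : cheb G < 5 / 3 * √(Nat.card G) :=
  hx.trans_lt (hG ▸ lt_mul_sqrt_of_sq_lt (by norm_num) hn)

variable {N : Subgroup G}

theorem cheb_lt_of_le_add [Finite G] [N.Normal] {w : ℝ}
    (hquot : cheb (G ⧸ N) ≤ 5 / 3 * √N.index) (hle : cheb G ≤ cheb (G ⧸ N) + w)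
    (hw : w ^ 2 < (5 / 3 * (√(Nat.card N) - 1)) ^ 2 * N.index) :
    cheb G < 5 / 3 * √(Nat.card G) := by
  have hcard : 1 ≤ √(Nat.card N : ℝ) := Real.one_le_sqrt.2 (mod_cast Nat.card_pos)
  have hw' : w < 5 / 3 * (√(Nat.card N) - 1) * √N.index := by
    refine lt_of_pow_lt_pow_left₀ 2 (by have := Real.sqrt_nonneg N.index; nlinarith) ?_
    rwa [mul_pow, Real.sq_sqrt (Nat.cast_nonneg _)]
  calc cheb G ≤ cheb (G ⧸ N) + w := hle
    _ < 5 / 3 * √N.index + 5 / 3 * (√(Nat.card N) - 1) * √N.index :=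
      add_lt_add_of_le_of_lt hquot hw'
    _ = 5 / 3 * √(Nat.card G) := by
      rw [← N.card_mul_index, Nat.cast_mul, Real.sqrt_mul (Nat.cast_nonneg _)]
      ring

theorem cheb_lt_of_le_add_of_sq_le [Finite G] [N.Normal] {w r : ℝ} {n : ℕ} (hr : 1 ≤ r)
    (hcard : r ^ 2 ≤ Nat.card N) (hindex : n ≤ N.index) (hquot : cheb (G ⧸ N) ≤ 5 / 3 * √N.index)
    (hle : cheb G ≤ cheb (G ⧸ N) + w) (hw : w ^ 2 < (5 / 3 * (r - 1)) ^ 2 * n) :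
    cheb G < 5 / 3 * √(Nat.card G) := by
  refine cheb_lt_of_le_add hquot hle (hw.trans_le ?_)
  have : r ≤ √(Nat.card N) := Real.le_sqrt_of_sq_le hcard
  have : 0 ≤ r - 1 := sub_nonneg.2 hr
  gcongr

theorem cheb_lt_of_mul_le [Finite G] [Group.IsSolvable G] [N.Normal] (hN : IsMinimalNormal G N)
    (hquot : cheb (G ⧸ N) ≤ 5 / 3 * √N.index) {c : ℝ} (hc : 0 < c)
    (hcard : (Nat.card N : ℝ) ^ 2 / (c * (Nat.card N - 1)) < (5 / 3 * (√(Nat.card N) - 1)) ^ 2)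
    (hor : c * (Nat.card N - 1) ≤ N.index ∨
      c * (Subgroup.centralizer (N : Set G)).index ≤ Nat.card N - 1) :
    cheb G < 5 / 3 * √(Nat.card G) := by
  have := hN.isMulCommutative
  set h := (Subgroup.centralizer (N : Set G)).index
  have hpos : (0 : ℝ) < N.index := mod_cast Nat.pos_of_ne_zero N.index_ne_zero_of_finite
  have hle : (h : ℝ) ≤ N.index :=
    mod_cast Nat.le_of_dvd (mod_cast hpos) index_centralizer_dvd_index
  have hq : (1 : ℝ) < Nat.card N := mod_cast N.one_lt_card_iff_ne_bot.2 hN.2.1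
  have hq' : (0 : ℝ) < Nat.card N - 1 := sub_pos.2 hq
  obtain hor | hor := hor
  · refine cheb_lt_of_le_add hquot (cheb_le_add_card hN) ?_
    calc (Nat.card N : ℝ) ^ 2
        = (Nat.card N : ℝ) ^ 2 / (c * (Nat.card N - 1)) * (c * (Nat.card N - 1)) := by field_simp
      _ ≤ (Nat.card N : ℝ) ^ 2 / (c * (Nat.card N - 1)) * N.index := by gcongr
      _ < (5 / 3 * (√(Nat.card N) - 1)) ^ 2 * N.index := by gcongr
  · refine cheb_lt_of_le_add hquot (cheb_le_add_index_centralizer_mul hN) ?_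
    calc (h * (Nat.card N / (Nat.card N - 1)) : ℝ) ^ 2
        = (Nat.card N : ℝ) ^ 2 / (c * (Nat.card N - 1) * (Nat.card N - 1)) * (c * h) * h := by
          field_simp
      _ ≤ (Nat.card N : ℝ) ^ 2 / (c * (Nat.card N - 1) * (Nat.card N - 1)) * (Nat.card N - 1) *
          N.index := by gcongr
      _ = (Nat.card N : ℝ) ^ 2 / (c * (Nat.card N - 1)) * N.index := by field_simp
      _ < (5 / 3 * (√(Nat.card N) - 1)) ^ 2 * N.index := by gcongr

end NumericalBounds

section SolvableBound

open Subgroup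

variable {N : Subgroup G} [N.Normal] [Finite G] [Group.IsSolvable G]

theorem cheb_lt_of_forall_not_isCompl (hN : IsMinimalNormal G N)
    (hquot : cheb (G ⧸ N) ≤ 5 / 3 * √N.index) (h : ∀ M, ¬ IsCompl M N) :
    cheb G < 5 / 3 * √(Nat.card G) := by
  have := hN.isMulCommutative
  have hcard : 1 < √(Nat.card N : ℝ) :=
    Real.lt_sqrt_of_sq_lt (by rw [one_pow]; exact mod_cast N.one_lt_card_iff_ne_bot.2 hN.2.1)
  have hindex : (0 : ℝ) < N.index := mod_cast Nat.pos_of_ne_zero N.index_ne_zero_of_finite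
  refine cheb_lt_of_le_add (w := 0) hquot (by rw [add_zero, cheb_eq_cheb_quotient hN h]) ?_
  rw [zero_pow two_ne_zero]
  have : 0 < √(Nat.card N : ℝ) - 1 := sub_pos.2 hcard
  positivity

theorem cheb_lt_of_card_prime_of_five_le (hN : IsMinimalNormal G N)
    (hquot : cheb (G ⧸ N) ≤ 5 / 3 * √N.index) (hp : (Nat.card N).Prime) (h5 : 5 ≤ Nat.card N) :
    cheb G < 5 / 3 * √(Nat.card G) := by
  have := hN.isMulCommutative
  have h5' : (5 : ℝ) ≤ Nat.card N := mod_cast h5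
  have hcast : (Nat.card N : ℝ) - 1 = (Nat.card N - 1 : ℕ) := by rw [Nat.cast_pred (by omega)]
  have hindex : N.index ≠ 0 := N.index_ne_zero_of_finite
  by_cases heq : N.index = Nat.card N - 1
  · have hcop : (Nat.card N).Coprime N.index :=
      (hp.coprime_iff_not_dvd).2 fun h => by have := Nat.le_of_dvd (by omega) h; omega
    refine cheb_lt_of_le_add hquot (cheb_le_add_card_sub_one_of_coprime hN hcop ?_) ?_
    · rintro rfl
      rw [index_top] at heq
      omega
    · rw [heq, ← hcast, sq]
      exact mul_lt_mul_of_pos_right (sub_one_lt_sq_sqrt_sub_one h5') (by linarith)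
  · refine cheb_lt_of_mul_le hN hquot two_pos (sq_div_two_mul_sub_one_lt h5') ?_
    rw [hcast]
    norm_cast
    obtain ⟨a, ha⟩ := index_centralizer_dvd_card_sub_one hp
    obtain ⟨b, hb⟩ := index_centralizer_dvd_index (N := N)
    obtain rfl | ha2 : a = 1 ∨ 2 ≤ a := by
      have : a ≠ 0 := by rintro rfl; omega
      omega
    · have hb2 : 2 ≤ b := by
        have : b ≠ 0 := by rintro rfl; omega
        have : b ≠ 1 := by rintro rfl; omega
        omega
      left
      rw [hb, ha, mul_one, mul_comm]
      gcongr
    · right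
      rw [ha, mul_comm]
      gcongr

theorem cheb_lt_of_card_eq_three_of_index_centralizer_eq_one (hN : IsMinimalNormal G N)
    (hquot : cheb (G ⧸ N) ≤ 5 / 3 * √N.index) (hcard : Nat.card N = 3)
    (hcentral : (centralizer (N : Set G)).index = 1) : cheb G < 5 / 3 * √(Nat.card G) := by
  have hpos : N.index ≠ 0 := N.index_ne_zero_of_finite
  obtain hone | htwo : N.index = 1 ∨ 2 ≤ N.index := by omega
  · have hG : Nat.card G = 3 := by rw [← N.card_mul_index, hcard, hone]
    have hle := cheb_le_of_card_prime (hG ▸ Nat.prime_three)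
    rw [hG] at hle
    exact cheb_lt_of_card_eq hG hle (by norm_num)
  · exact cheb_lt_of_le_add_of_sq_le (r := 1.732) (n := 2) (by norm_num)
      (by rw [hcard]; norm_num) htwo hquot (cheb_le_add_index_centralizer_mul hN)
      (by rw [hcentral, hcard]; norm_num)

theorem cheb_lt_of_card_eq_three (hN : IsMinimalNormal G N)
    (hquot : cheb (G ⧸ N) ≤ 5 / 3 * √N.index) (hcard : Nat.card N = 3) :
    cheb G < 5 / 3 * √(Nat.card G) := by
  have := hN.isMulCommutative
  have hG : Nat.card G = 3 * N.index := by rw [← N.card_mul_index, hcard]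
  have hpos : N.index ≠ 0 := N.index_ne_zero_of_finite
  have hdvd := index_centralizer_dvd_card_sub_one (hcard ▸ Nat.prime_three)
  rw [hcard] at hdvd
  obtain hone | htwo := (Nat.dvd_prime Nat.prime_two).1 hdvd
  · exact cheb_lt_of_card_eq_three_of_index_centralizer_eq_one hN hquot hcard hone
  · have hcases : N.index = 2 ∨ N.index = 4 ∨ N.index = 6 ∨ 8 ≤ N.index := by
      have h2 : 2 ∣ N.index := htwo ▸ index_centralizer_dvd_index
      omega
    obtain h2 | h4 | h6 | h8 := hcases
    · rw [h2] at hG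
      exact cheb_lt_of_card_eq hG (cheb_le_four_of_card_eq_six hG) (by norm_num)
    · have hle := cheb_le_add_card_sub_one_of_coprime hN (by rw [hcard, h4]; norm_num)
        (by rintro rfl; rw [index_top] at h4; omega)
      exact cheb_lt_of_le_add_of_sq_le (r := 1.732) (n := 4) (by norm_num)
        (by rw [hcard]; norm_num) h4.ge hquot hle (by rw [hcard]; norm_num)
    · have hle := cheb_le_add_card hN
      have hle' := cheb_le_four_of_card_eq_six (G := G ⧸ N) h6
      rw [hcard] at hle
      rw [h6] at hG
      exact cheb_lt_of_card_eq hG (hle.trans (add_le_add_left hle' _)) (by norm_num)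
    · exact cheb_lt_of_le_add_of_sq_le (r := 1.732) (n := 8) (by norm_num)
        (by rw [hcard]; norm_num) h8 hquot (cheb_le_add_card hN) (by rw [hcard]; norm_num)

theorem cheb_lt_of_card_eq_four (hN : IsMinimalNormal G N)
    (hquot : cheb (G ⧸ N) ≤ 5 / 3 * √N.index) (hcard : Nat.card N = 4) :
    cheb G < 5 / 3 * √(Nat.card G) := by
  have := hN.isMulCommutative
  have hpos : N.index ≠ 0 := N.index_ne_zero_of_finite
  have hindex := hN.index_ne_pow_of_not_card_prime Nat.prime_two (hcard ▸ by norm_num)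
    (hcard ▸ by norm_num)
  have hcases : N.index = 3 ∨ N.index = 5 ∨ 6 ≤ N.index := by
    have := hindex 0
    have := hindex 1
    have := hindex 2
    omega
  obtain h3 | h5 | h6 := hcases
  · have hG : Nat.card G = 12 := by rw [← N.card_mul_index, hcard, h3]
    have hle := cheb_le_add_card_sub_one_of_coprime hN (by rw [hcard, h3]; norm_num)
      (by rintro rfl; rw [index_top] at h3; omega)
    have hquot_card : Nat.card (G ⧸ N) = 3 := h3
    have hle' := cheb_le_of_card_prime (hquot_card ▸ Nat.prime_three)
    rw [hquot_card] at hle'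
    rw [hcard] at hle
    exact cheb_lt_of_card_eq hG (hle.trans (add_le_add_left hle' _)) (by norm_num)
  · have hle := cheb_le_add_card_sub_one_of_coprime hN (by rw [hcard, h5]; norm_num)
      (by rintro rfl; rw [index_top] at h5; omega)
    exact cheb_lt_of_le_add_of_sq_le (r := 2) (n := 5) (by norm_num)
      (by rw [hcard]; norm_num) h5.ge hquot hle (by rw [hcard]; norm_num)
  · exact cheb_lt_of_le_add_of_sq_le (r := 2) (n := 6) (by norm_num)
      (by rw [hcard]; norm_num) h6 hquot (cheb_le_add_card hN) (by rw [hcard]; norm_num)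

theorem cheb_lt_of_card_ne_two (hN : IsMinimalNormal G N)
    (hquot : cheb (G ⧸ N) ≤ 5 / 3 * √N.index) (hcard : Nat.card N ≠ 2) :
    cheb G < 5 / 3 * √(Nat.card G) := by
  obtain hge | hlt := le_or_gt 8 (Nat.card N)
  · have hge' : (8 : ℝ) ≤ Nat.card N := mod_cast hge
    refine cheb_lt_of_mul_le hN hquot one_pos ?_ ?_
    · rw [one_mul]
      exact sq_div_sub_one_lt hge'
    · have := hN.isMulCommutative
      have hle : ((centralizer (N : Set G)).index : ℝ) ≤ N.index := Nat.cast_le.2 <|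
        Nat.le_of_dvd (Nat.pos_of_ne_zero N.index_ne_zero_of_finite) index_centralizer_dvd_index
      rw [one_mul, one_mul]
      exact (le_total _ _).imp_left hle.trans'
  · have hone : Nat.card N ≠ 1 := fun h => hN.2.1 (card_eq_one.1 h)
    have hsix : Nat.card N ≠ 6 := fun h => not_isPrimePow_six (h ▸ hN.isPrimePow_card)
    have hpos : 0 < Nat.card N := Nat.card_pos
    have hcases : Nat.card N = 3 ∨ Nat.card N = 4 ∨ Nat.card N = 5 ∨ Nat.card N = 7 := by omega
    obtain h | h | h | h := hcases
    · exact cheb_lt_of_card_eq_three hN hquot h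
    · exact cheb_lt_of_card_eq_four hN hquot h
    · exact cheb_lt_of_card_prime_of_five_le hN hquot (h ▸ Nat.prime_five) h.ge
    · exact cheb_lt_of_card_prime_of_five_le hN hquot (h ▸ Nat.prime_seven) (by omega)

end SolvableBound

section KleinFour

open Subgroup

theorem isKleinFour_of_sq_eq_one (hsq : ∀ x : G, x ^ 2 = 1) (hcard : Nat.card G = 4) :
    IsKleinFour G where
  card_four := hcard
  exponent_two := by
    have hdvd := Monoid.exponent_dvd_of_forall_pow_eq_one hsq
    refine ((Nat.dvd_prime Nat.prime_two).1 hdvd).resolve_left fun h => ?_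
    have := Monoid.exp_eq_one_iff.1 h
    have := Nat.card_of_subsingleton (1 : G)
    omega

theorem cheb_lt_or_isKleinFour_of_sq_eq_one [Finite G] [Group.IsSolvable G]
    (hsq : ∀ x : G, x ^ 2 = 1) {N : Subgroup G} [N.Normal] (hN : IsMinimalNormal G N)
    (hcard : Nat.card N = 2) (hquot : cheb (G ⧸ N) ≤ 5 / 3 * √N.index) :
    cheb G < 5 / 3 * √(Nat.card G) ∨ IsKleinFour G := by
  have hG : Nat.card G = 2 * N.index := by rw [← N.card_mul_index, hcard]
  have hsq' (x : G ⧸ N) : x ^ 2 = 1 := QuotientGroup.induction_on x fun g => by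
    rw [← QuotientGroup.mk_pow, hsq, QuotientGroup.mk_one]
  have hgroup : IsPGroup 2 G := fun x => ⟨1, by rw [pow_one, hsq]⟩
  obtain ⟨s, hs⟩ := IsPGroup.iff_card.1 (hgroup.to_quotient N)
  have hindex : N.index = 2 ^ s := hs
  have hadd := cheb_le_add_card hN
  obtain hlt | hge := lt_or_ge s 4
  · interval_cases s <;> norm_num only at hindex <;> rw [hindex] at hG
    · left
      have hle := cheb_le_of_card_prime (G := G) (by rw [hG]; exact Nat.prime_two)
      rw [hG] at hle
      exact cheb_lt_of_card_eq hG hle (by norm_num)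
    · exact Or.inr (isKleinFour_of_sq_eq_one hsq hG)
    · exact Or.inl (cheb_lt_of_card_eq hG (cheb_of_card_eq_eight hsq hG).le (by norm_num))
    · left
      rw [cheb_of_card_eq_eight hsq' hindex, hcard] at hadd
      exact cheb_lt_of_card_eq hG hadd (by norm_num)
  · exact Or.inl <| cheb_lt_of_le_add_of_sq_le (r := 1.414) (n := 2 ^ 4) (by norm_num)
      (by rw [hcard]; norm_num) (hindex ▸ Nat.pow_le_pow_right two_pos hge) hquot hadd
      (by rw [hcard]; norm_num)

theorem IsMinimalNormal.index_lt_card [Finite G] {N : Subgroup G} (hN : IsMinimalNormal G N) :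
    N.index < Nat.card G := by
  rw [← N.card_mul_index]
  exact lt_mul_of_one_lt_left (Nat.pos_of_ne_zero N.index_ne_zero_of_finite)
    (N.one_lt_card_iff_ne_bot.2 hN.2.1)

theorem cheb_eq_of_isKleinFour [IsKleinFour G] : cheb G = 5 / 3 * √(Nat.card G) := by
  have hsqrt : √4 = (2 : ℝ) := by rw [Real.sqrt_eq_iff_mul_self_eq] <;> norm_num
  rw [cheb_of_isKleinFour, IsKleinFour.card_four, Nat.cast_ofNat, hsqrt]
  norm_num

theorem cheb_lt_or_isKleinFour (G : Type*) [Group G] [Finite G] [Group.IsSolvable G] :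
    cheb G < 5 / 3 * √(Nat.card G) ∨ IsKleinFour G := by
  induction hn : Nat.card G using Nat.strong_induction_on generalizing G with
  | _ n ih =>
    subst hn
    obtain hG | hG := subsingleton_or_nontrivial G
    · left
      exact cheb_lt_of_card_eq Nat.card_unique cheb_of_subsingleton.le (by norm_num)
    have hquot {N : Subgroup G} (hN : IsMinimalNormal G N) :
        have := hN.1
        cheb (G ⧸ N) ≤ 5 / 3 * √N.index := by
      have := hN.1
      obtain h | h := ih N.index hN.index_lt_card (G ⧸ N) rfl
      · exact h.le
      · exact cheb_eq_of_isKleinFour.le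
    by_cases hall : ∀ N : Subgroup G, IsMinimalNormal G N → Nat.card N = 2 ∧ ∃ M, IsCompl M N
    · obtain ⟨N, hN⟩ := exists_isMinimalNormal G
      have := hN.1
      exact cheb_lt_or_isKleinFour_of_sq_eq_one (sq_eq_one_of_forall_isMinimalNormal hall) hN
        (hall N hN).1 (hquot hN)
    · left
      push Not at hall
      obtain ⟨N, hN, h⟩ := hall
      have := hN.1
      by_cases hcard : Nat.card N = 2
      · exact cheb_lt_of_forall_not_isCompl hN (hquot hN) (h hcard)
      · exact cheb_lt_of_card_ne_two hN (hquot hN) hcard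

theorem isKleinFour_iff_nonempty_mulEquiv :
    IsKleinFour G ↔ Nonempty (G ≃* Multiplicative (ZMod 2 × ZMod 2)) := by
  have hadd : IsAddKleinFour (ZMod 2 × ZMod 2) :=
    ⟨by rw [Nat.card_prod, Nat.card_zmod], by
      rw [AddMonoid.exponent_prod, ZMod.exponent, lcm_same, normalize_eq]⟩
  exact ⟨fun _ => IsKleinFour.nonempty_mulEquiv, fun ⟨e⟩ =>
    ⟨by rw [Nat.card_congr e.toEquiv, IsKleinFour.card_four],
      by rw [Monoid.exponent_eq_of_mulEquiv e, IsKleinFour.exponent_two]⟩⟩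

end KleinFour

/-- **Theorem 1(ii)**: if `G` is a finite soluble group then `C(G) ≤ (5/3)·√|G|`,
with equality if and only if `G ≅ C₂ × C₂`. -/
theorem chebotarev_soluble_bound (G : Type) [Group G] [Finite G] (hsol : IsSolvable G) :
    cheb G ≤ 5 / 3 * Real.sqrt (Nat.card G) ∧
      (cheb G = 5 / 3 * Real.sqrt (Nat.card G) ↔
        Nonempty (G ≃* Multiplicative (ZMod 2 × ZMod 2))) := by
  have : Group.IsSolvable G := hsol
  rw [← isKleinFour_iff_nonempty_mulEquiv]
  obtain hlt | hklein := cheb_lt_or_isKleinFour G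
  · exact ⟨hlt.le, fun h => absurd h hlt.ne, fun _ => cheb_eq_of_isKleinFour⟩
  · exact ⟨cheb_eq_of_isKleinFour.le, fun _ => hklein, fun _ => cheb_eq_of_isKleinFour⟩

end ChebotarevPaper
end
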